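/- Fix a prime power q and ε ∈ (0,1/2). There exist constants c, C > 0 (depending only on q and ε) such that for every δ > 0 there is an integer N with the following property: for all integers n ≥ N and all integers m with (1+ε)·(log n)/(log q) ≤ m ≤ (2−ε)·(log n)/(log q), one has (1−δ)·G_q(x_q)·exp( c·n³/(m·q^{2m}) ) ≤ p_{n,m,q}/p_{n,m} ≤ (1+δ)·G_q(x_q)·exp( C·n³/(m·q^{2m}) ). -/

import Mathlib

open Real

noncomputable section

/-- Predicate characterizing the Dickman function `ρ : [0,∞) → (0,∞)`:
continuous on `[0,∞)`, positive, equal to `1` on `[0,1]`, and satisfying the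
delay differential equation `t·ρ'(t) + ρ(t-1) = 0` for `t > 1`. -/
def IsDickman (ρ : ℝ → ℝ) : Prop :=
  ContinuousOn ρ (Set.Ici 0) ∧
  (∀ t : ℝ, 0 ≤ t → 0 < ρ t) ∧
  (∀ t ∈ Set.Icc (0:ℝ) 1, ρ t = 1) ∧
  (∀ t : ℝ, 1 < t → HasDerivAt ρ (-(ρ (t - 1)) / t) t)

/-- `ξ(u)`: for `u > 1`, the unique positive solution of `e^ξ = 1 + u·ξ`; otherwise `0`. -/
def xi (u : ℝ) : ℝ :=
  open Classical in
  if h : ∃ x : ℝ, 0 < x ∧ Real.exp x = 1 + u * x then h.choose else 0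

/-- `p_{n,m}`: probability that a uniformly random permutation of `{1,…,n}` is `m`-friable,
i.e. has no cycle of length greater than `m`. -/
def permProb (n m : ℕ) : ℝ :=
  (Nat.card {σ : Equiv.Perm (Fin n) // ∀ c ∈ σ.cycleType, c ≤ m} : ℝ) /
    (Nat.factorial n : ℝ)

/-- `p_{n,m,q}`: proportion of monic polynomials of degree `n` over a finite field `F`
(of cardinality `q`) that are `m`-friable, i.e. all of whose monic irreducible factors
have degree at most `m`. -/
def polyProb (F : Type) [Field F] [Fintype F] (n m : ℕ) : ℝ :=
  (Nat.card {f : Polynomial F // f.Monic ∧ f.natDegree = n ∧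
      ∀ p : Polynomial F, p.Monic → Irreducible p → p ∣ f → p.natDegree ≤ m} : ℝ) /
    (Fintype.card F : ℝ) ^ n

/-- `F_q(z) = ∏_{deg P ≤ m} (1 - (z/q)^{deg P})⁻¹`, the product over monic irreducible
polynomials `P` over `F` of degree at most `m`. -/
def FqFun (F : Type) [Field F] [Fintype F] (m : ℕ) (z : ℝ) : ℝ :=
  ∏ᶠ p ∈ {p : Polynomial F | p.Monic ∧ Irreducible p ∧ p.natDegree ≤ m},
    (1 - (z / (Fintype.card F : ℝ)) ^ p.natDegree)⁻¹

/-- `G_q(z) = F_q(z) · exp(-∑_{i=1}^m z^i/i)`. -/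
def Gq (F : Type) [Field F] [Fintype F] (m : ℕ) (z : ℝ) : ℝ :=
  FqFun F m z * Real.exp (-(∑ i ∈ Finset.Icc 1 m, z ^ i / (i : ℝ)))

/-- The coefficients `d_{m,i}`. -/
def dcoef (m i : ℕ) : ℝ :=
  if i = m then -(1 / (m : ℝ)) * ∑ j ∈ Finset.Icc 2 m, (1 : ℝ) / (j : ℝ)
  else Real.Gamma ((i : ℝ) + (i : ℝ) / (m : ℝ)) /
    (((m : ℝ) - (i : ℝ)) * (Nat.factorial i : ℝ) * Real.Gamma (1 + (i : ℝ) / (m : ℝ)))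

/-- `T(s) = ∫₀^s ((e^t - 1)/t)·((t/m)/(1 - e^{-t/m}) - 1) dt`, integrand extended by `0` at `t = 0`. -/
def Tfun (m : ℕ) (s : ℝ) : ℝ :=
  ∫ t in (0:ℝ)..s,
    if t = 0 then 0 else
      ((Real.exp t - 1) / t) * ((t / (m : ℝ)) / (1 - Real.exp (-t / (m : ℝ))) - 1)

end


section PartA

lemma fa_coeff (a p : ℕ → ℝ) (hp0 : p 0 = 1)
    (hrec : ∀ n : ℕ, ((n : ℝ) + 1) * p (n + 1) = ∑ k ∈ Finset.range (n + 1), a (k + 1) * p (n - k))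
    (N : ℕ) (f : ℂ → ℂ)
    (hf : f = fun z => Complex.exp (∑ k ∈ Finset.range N, (a (k + 1) : ℂ) / ((k : ℂ) + 1) * z ^ (k + 1))) :
    ∀ n ≤ N, iteratedDeriv n f 0 = (n.factorial : ℂ) * (p n : ℂ) := by
  set h : ℂ → ℂ := fun z => ∑ k ∈ Finset.range N, (a (k + 1) : ℂ) * z ^ k with hh
  have hfd : ∀ r, ContDiff ℂ r f := by intro r; rw [hf]; fun_prop
  have hhd : ∀ r, ContDiff ℂ r h := by intro r; rw [hh]; fun_prop
  have hderiv : deriv f = h * f := by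
    funext z
    have h1 : HasDerivAt (fun z : ℂ => ∑ k ∈ Finset.range N, (a (k + 1) : ℂ) / ((k : ℂ) + 1) * z ^ (k + 1))
        (h z) z := by
      rw [hh]
      apply HasDerivAt.fun_sum
      intro k _
      have := ((hasDerivAt_pow (k + 1) z).const_mul ((a (k + 1) : ℂ) / ((k : ℂ) + 1)))
      have hk0 : ((k : ℂ) + 1) ≠ 0 := by exact_mod_cast Nat.succ_ne_zero k
      refine this.congr_deriv ?_
      rw [Nat.add_sub_cancel]
      push_cast
      field_simp
    have h2 := h1.cexp
    rw [hf, h2.deriv]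
    simp [mul_comm]
  have hcoef : ∀ k < N, iteratedDeriv k h 0 = (k.factorial : ℂ) * (a (k + 1) : ℂ) := by
    intro k hk
    rw [hh, iteratedDeriv_fun_sum (by intro i _; fun_prop)]
    have : ∀ i ∈ Finset.range N, iteratedDeriv k (fun z : ℂ => (a (i + 1) : ℂ) * z ^ i) 0 =
        if k = i then (k.factorial : ℂ) * (a (k + 1) : ℂ) else 0 := by
      intro i _
      rw [iteratedDeriv_const_mul_field, iteratedDeriv_fun_pow_zero]
      split_ifs <;> simp_all [mul_comm]
    rw [Finset.sum_congr rfl this]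
    simp [hk]
  intro n
  induction n using Nat.strong_induction_on with
  | _ n ih =>
    intro hn
    rcases n with _ | n
    · simp [hp0, hf]
    · rw [iteratedDeriv_succ', hderiv, iteratedDeriv_mul (hhd _).contDiffAt (hfd _).contDiffAt]
      have h3 : ∀ k ∈ Finset.range (n + 1), (n.choose k : ℂ) * iteratedDeriv k h 0 * iteratedDeriv (n - k) f 0
          = (n.factorial : ℂ) * ((a (k + 1) * p (n - k) : ℝ) : ℂ) := by
        intro k hk
        have hk' : k ≤ n := by simpa [Nat.lt_succ_iff] using hk
        rw [hcoef k (by omega), ih (n - k) (by omega) (by omega)]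
        have := Nat.choose_mul_factorial_mul_factorial hk'
        rw [← this]
        push_cast
        ring
      rw [Finset.sum_congr rfl h3, ← Finset.mul_sum, ← Complex.ofReal_sum, ← hrec n, Nat.factorial_succ]
      push_cast
      ring

lemma fa_trunc (a p : ℕ → ℝ) (hp0 : p 0 = 1)
    (hrec : ∀ n : ℕ, ((n : ℝ) + 1) * p (n + 1) = ∑ k ∈ Finset.range (n + 1), a (k + 1) * p (n - k))
    (N n : ℕ) (hn : n ≤ N) (x : ℝ) (hx : 0 < x) :
    ∫ θ in (-π)..π, Complex.exp (∑ k ∈ Finset.range N, (a (k + 1) : ℂ) / ((k : ℂ) + 1) *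
      ((x : ℂ) * Complex.exp (θ * Complex.I)) ^ (k + 1)) * Complex.exp (-(n * θ * Complex.I)) =
      2 * π * (p n : ℂ) * x ^ n := by
  set f : ℂ → ℂ := fun z => Complex.exp (∑ k ∈ Finset.range N, (a (k + 1) : ℂ) / ((k : ℂ) + 1) * z ^ (k + 1)) with hf
  have h1 := fa_coeff a p hp0 hrec N f hf n hn
  have hd : Differentiable ℂ f := by rw [hf]; fun_prop
  have h2 := hd.differentiableOn (s := Metric.closedBall 0 x)
    |>.circleIntegral_one_div_sub_center_pow_smul hx n
  rw [h1] at h2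
  have hx0 : (x : ℂ) ≠ 0 := by exact_mod_cast hx.ne'
  have h3 : ∀ θ : ℝ, deriv (circleMap 0 x) θ • ((1 / (circleMap 0 x θ - 0) ^ (n + 1)) • f (circleMap 0 x θ))
      = Complex.I * ((x : ℂ) ^ n)⁻¹ * (f ((x : ℂ) * Complex.exp (θ * Complex.I)) * Complex.exp (-(n * θ * Complex.I))) := by
    intro θ
    rw [deriv_circleMap, circleMap_zero, Complex.exp_neg]
    have : Complex.exp (n * θ * Complex.I) = Complex.exp (θ * Complex.I) ^ n := by
      rw [← Complex.exp_nat_mul]; ring_nf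
    rw [this]
    have := Complex.exp_ne_zero (θ * Complex.I)
    simp only [smul_eq_mul, sub_zero]
    field_simp
    ring
  rw [circleIntegral] at h2
  simp_rw [h3] at h2
  rw [intervalIntegral.integral_const_mul] at h2
  have hper : Function.Periodic (fun θ : ℝ => f ((x : ℂ) * Complex.exp (θ * Complex.I)) * Complex.exp (-(n * θ * Complex.I))) (2 * π) := by
    intro θ
    have e1 : Complex.exp (((θ + 2 * π : ℝ) : ℂ) * Complex.I) = Complex.exp (θ * Complex.I) := by
      push_cast
      rw [add_mul]
      exact Complex.exp_periodic _
    have e2 : ∀ θ : ℝ, Complex.exp (-(n * θ * Complex.I)) = (Complex.exp (θ * Complex.I) ^ n)⁻¹ := by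
      intro θ
      rw [Complex.exp_neg, ← Complex.exp_nat_mul]; ring_nf
    simp only [e2, e1]
  have h4 := hper.intervalIntegral_add_eq (-π) 0
  rw [show -π + 2 * π = π by ring, zero_add] at h4
  rw [h4]
  have hI := Complex.I_ne_zero
  have hfac : (n.factorial : ℂ) ≠ 0 := by exact_mod_cast n.factorial_ne_zero
  have h5 : Complex.I * ((x : ℂ) ^ n)⁻¹ * (∫ θ in (0)..2 * π, (f ((x : ℂ) * Complex.exp (θ * Complex.I)) * Complex.exp (-(n * θ * Complex.I)))) = 2 * π * Complex.I * (p n : ℂ) := by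
    rw [h2, smul_eq_mul]
    field_simp
  generalize (∫ θ in (0)..2 * π, (f ((x : ℂ) * Complex.exp (θ * Complex.I)) * Complex.exp (-(n * θ * Complex.I)))) = Z at h5 ⊢
  field_simp at h5
  linear_combination h5

/-- The centred integrand. -/
noncomputable def phi (b : ℕ → ℝ) (θ : ℝ) : ℂ :=
  ∑' j : ℕ, ((b j / j : ℝ) : ℂ) * (Complex.exp ((j * θ : ℝ) * Complex.I) - 1 - (j * θ : ℝ) * Complex.I)

lemma summable_div_nat {b : ℕ → ℝ} (hb : Summable b) (hb0 : ∀ j, 0 ≤ b j) :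
    Summable (fun j : ℕ => b j / j) := by
  refine Summable.of_nonneg_of_le (fun j => by have := hb0 j; positivity) (fun j => ?_) hb
  rcases Nat.eq_zero_or_pos j with h | h
  · simp [h, hb0]
  · exact div_le_self (hb0 j) (by exact_mod_cast h)

lemma fa_full (a p : ℕ → ℝ) (hp0 : p 0 = 1)
    (hrec : ∀ n : ℕ, ((n : ℝ) + 1) * p (n + 1) = ∑ k ∈ Finset.range (n + 1), a (k + 1) * p (n - k))
    (ha : ∀ j, 0 ≤ a j) (ha0 : a 0 = 0)
    (n : ℕ) (x : ℝ) (hx : 0 < x) (hs : HasSum (fun j => a j * x ^ j) n) :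
    ((2 * π * p n * x ^ n : ℝ) : ℂ) = (Real.exp (∑' j : ℕ, a j * x ^ j / j) : ℝ) *
      ∫ θ in (-π)..π, Complex.exp (phi (fun j => a j * x ^ j) θ) := by
  set b : ℕ → ℝ := fun j => a j * x ^ j with hb
  have hb0 : ∀ j, 0 ≤ b j := fun j => mul_nonneg (ha j) (by positivity)
  have hbs : Summable b := hs.summable
  have hws := summable_div_nat hbs hb0
  set g : ℕ → ℝ → ℂ := fun j θ => ((b j / j : ℝ) : ℂ) * Complex.exp ((j * θ : ℝ) * Complex.I) with hg
  have hgn : ∀ j θ, ‖g j θ‖ = b j / j := by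
    intro j θ
    rw [hg]
    simp only [norm_mul, Complex.norm_exp_ofReal_mul_I, mul_one, Complex.norm_real]
    rw [Real.norm_of_nonneg]; have := hb0 j; positivity
  have hgs : ∀ θ, Summable (fun j => g j θ) := fun θ => by
    apply Summable.of_norm; simp_rw [hgn]; exact hws
  have hsumle : ∀ N, ∑ j ∈ Finset.range N, b j / j ≤ ∑' j : ℕ, b j / j := fun N =>
    hws.sum_le_tsum _ (fun j _ => by have := hb0 j; positivity)
  -- truncated integrals
  have htr : ∀ N, n ≤ N → ∫ θ in (-π)..π, Complex.exp (∑ j ∈ Finset.range (N + 1), g j θ) * Complex.exp (-(n * θ * Complex.I))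
      = ((2 * π * p n * x ^ n : ℝ) : ℂ) := by
    intro N hN
    have := fa_trunc a p hp0 hrec N n hN x hx
    push_cast
    rw [← this]
    apply intervalIntegral.integral_congr
    intro θ _
    simp only
    rw [Finset.sum_range_succ']
    congr 2
    have : g 0 θ = 0 := by simp [hg]
    rw [this, add_zero]
    apply Finset.sum_congr rfl
    intro k _
    simp only [hg, hb]
    rw [mul_pow, ← Complex.exp_nat_mul]
    push_cast
    ring_nf
  have hlim : Filter.Tendsto (fun N : ℕ => ∫ θ in (-π)..π, Complex.exp (∑ j ∈ Finset.range (N + 1), g j θ) * Complex.exp (-(n * θ * Complex.I)))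
      Filter.atTop (nhds (∫ θ in (-π)..π, Complex.exp (∑' j, g j θ) * Complex.exp (-(n * θ * Complex.I)))) := by
    apply intervalIntegral.tendsto_integral_filter_of_dominated_convergence (fun _ => Real.exp (∑' j : ℕ, b j / j))
    · refine Filter.Eventually.of_forall (fun N => ?_)
      apply Continuous.aestronglyMeasurable
      simp only [hg]
      fun_prop
    · refine Filter.Eventually.of_forall (fun N => Filter.Eventually.of_forall (fun θ _ => ?_))
      rw [norm_mul]
      have e : -(n * θ * Complex.I) = ((-(n * θ) : ℝ) : ℂ) * Complex.I := by push_cast; ring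
      rw [e, Complex.norm_exp_ofReal_mul_I, mul_one]
      refine (Complex.norm_exp_le_exp_norm _).trans (Real.exp_le_exp.2 ?_)
      refine (norm_sum_le _ _).trans ?_
      simp_rw [hgn]
      exact hsumle _
    · simp
    · refine Filter.Eventually.of_forall (fun θ _ => ?_)
      refine Filter.Tendsto.mul_const _ ?_
      refine (Complex.continuous_exp.tendsto _).comp ?_
      exact ((hgs θ).hasSum.tendsto_sum_nat).comp (Filter.tendsto_add_atTop_nat 1)
  have hconst : Filter.Tendsto (fun N : ℕ => ∫ θ in (-π)..π, Complex.exp (∑ j ∈ Finset.range (N + 1), g j θ) * Complex.exp (-(n * θ * Complex.I)))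
      Filter.atTop (nhds ((2 * π * p n * x ^ n : ℝ) : ℂ)) := by
    refine tendsto_const_nhds.congr' ?_
    filter_upwards [Filter.eventually_ge_atTop n] with N hN
    exact (htr N hN).symm
  rw [tendsto_nhds_unique hconst hlim, ← intervalIntegral.integral_const_mul]
  apply intervalIntegral.integral_congr
  intro θ _
  simp only
  rw [Complex.ofReal_exp, ← Complex.exp_add, ← Complex.exp_add]
  congr 1
  have k1 : phi b θ = (∑' j, g j θ) - (((∑' j : ℕ, b j / j : ℝ)) : ℂ) - (n * θ : ℝ) * Complex.I := by
    have s1 : HasSum (fun j : ℕ => ((b j / j : ℝ) : ℂ)) ((∑' j : ℕ, b j / j : ℝ) : ℂ) := Complex.hasSum_ofReal.2 hws.hasSum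
    have s2 : HasSum (fun j : ℕ => (b j : ℂ) * (θ * Complex.I)) ((n : ℂ) * (θ * Complex.I)) := by
      have : HasSum (fun j : ℕ => ((b j : ℝ) : ℂ)) ((n : ℝ) : ℂ) := Complex.hasSum_ofReal.2 hs
      simpa using this.mul_right (θ * Complex.I : ℂ)
    have s3 := ((hgs θ).hasSum.sub s1).sub s2
    rw [phi]
    have : ((n * θ : ℝ) : ℂ) * Complex.I = (n : ℂ) * (θ * Complex.I) := by push_cast; ring
    rw [this, ← s3.tsum_eq]
    apply tsum_congr
    intro j
    simp only [hg]
    rcases Nat.eq_zero_or_pos j with h | h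
    · subst h; simp [hb, ha0]
    · have : (j : ℂ) ≠ 0 := by exact_mod_cast h.ne'
      push_cast
      field_simp
  rw [k1, show (∑' j : ℕ, a j * x ^ j / j) = ∑' j : ℕ, b j / j from rfl]
  push_cast
  ring

end PartA


section PartB

lemma norm_exp_term_le (u : ℝ) :
    ‖Complex.exp ((u : ℝ) * Complex.I) - 1 - (u : ℝ) * Complex.I‖ ≤ 2 * u ^ 2 := by
  have hn : ‖(u : ℂ) * Complex.I‖ = |u| := by simp
  rcases le_or_gt |u| 1 with h | h
  · have := Complex.norm_exp_sub_one_sub_id_le (x := (u : ℂ) * Complex.I) (by rw [hn]; exact h)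
    rw [hn, sq_abs] at this
    nlinarith [sq_nonneg u]
  · have h1 := norm_exp_I_mul_ofReal_sub_one_le (x := u)
    rw [mul_comm] at h1
    have h2 := norm_sub_le (Complex.exp ((u : ℝ) * Complex.I) - 1) ((u : ℝ) * Complex.I)
    rw [hn] at h2
    rw [Real.norm_eq_abs] at h1
    have : |u| ≤ u ^ 2 := by rw [← sq_abs]; nlinarith
    linarith

lemma abs_sin_sub_self_le (u : ℝ) : |Real.sin u - u| ≤ |u| ^ 3 := by
  have key : ∀ v : ℝ, 0 ≤ v → |Real.sin v - v| ≤ v ^ 3 := by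
    intro v hv
    have h1 := Real.sin_ge_sub_cube hv
    have h2 := Real.sin_le hv
    have : 0 ≤ v ^ 3 := by positivity
    rw [abs_le]; constructor <;> linarith
  rcases le_total 0 u with h | h
  · rw [abs_of_nonneg h]; exact key u h
  · rw [abs_of_nonpos h]
    have := key (-u) (by linarith)
    rw [Real.sin_neg] at this
    rw [abs_sub_comm]
    convert this using 2; ring

lemma cos_two_lower (α β : ℝ) : 1 - Real.cos (α - β) ≤ 2 * (1 - Real.cos α) + 2 * (1 - Real.cos β) := by
  rw [Real.cos_sub]
  nlinarith [Real.sin_sq_add_cos_sq α, Real.sin_sq_add_cos_sq β,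
    sq_nonneg (Real.sin α + Real.sin β), sq_nonneg (Real.cos α + Real.cos β - 2)]

/-- term of phi -/
noncomputable def phiT (b : ℕ → ℝ) (θ : ℝ) (j : ℕ) : ℂ :=
  ((b j / j : ℝ) : ℂ) * (Complex.exp ((j * θ : ℝ) * Complex.I) - 1 - (j * θ : ℝ) * Complex.I)

lemma phiT_norm (b : ℕ → ℝ) (θ : ℝ) (j : ℕ) : ‖phiT b θ j‖ ≤ 2 * θ ^ 2 * (j * |b j|) := by
  rw [phiT, norm_mul, Complex.norm_real, Real.norm_eq_abs]
  have := norm_exp_term_le (j * θ)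
  calc _ ≤ |b j / j| * (2 * (j * θ) ^ 2) := by gcongr
    _ = 2 * θ ^ 2 * (j * |b j|) := by
      rw [abs_div, Nat.abs_cast]
      rcases Nat.eq_zero_or_pos j with h | h
      · simp [h]
      · field_simp

lemma phiT_summable {b : ℕ → ℝ} (hs : Summable (fun j : ℕ => (j : ℝ) * |b j|)) (θ : ℝ) :
    Summable (phiT b θ) :=
  Summable.of_norm_bounded (hs.mul_left (2 * θ ^ 2)) (phiT_norm b θ)

lemma phi_eq (b : ℕ → ℝ) (θ : ℝ) : phi b θ = ∑' j, phiT b θ j := rfl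

lemma phiT_re (b : ℕ → ℝ) (θ : ℝ) (j : ℕ) : (phiT b θ j).re = -(b j / j * (1 - Real.cos (j * θ))) := by
  rw [phiT, Complex.re_ofReal_mul]
  simp only [Complex.sub_re, Complex.exp_ofReal_mul_I_re, Complex.one_re, Complex.mul_re, Complex.ofReal_re,
    Complex.I_re, Complex.ofReal_im, Complex.I_im]
  ring

lemma phiT_im (b : ℕ → ℝ) (θ : ℝ) (j : ℕ) : (phiT b θ j).im = b j / j * (Real.sin (j * θ) - j * θ) := by
  rw [phiT, Complex.im_ofReal_mul]
  simp only [Complex.sub_im, Complex.exp_ofReal_mul_I_im, Complex.one_im, Complex.mul_im, Complex.ofReal_re,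
    Complex.I_re, Complex.ofReal_im, Complex.I_im]
  ring

lemma phi_re {b : ℕ → ℝ} (hs : Summable (fun j : ℕ => (j : ℝ) * |b j|)) (θ : ℝ) :
    HasSum (fun j : ℕ => -(b j / j * (1 - Real.cos (j * θ)))) (phi b θ).re := by
  have := Complex.hasSum_re (phiT_summable hs θ).hasSum
  simp_rw [phiT_re] at this
  exact this

lemma phi_im {b : ℕ → ℝ} (hs : Summable (fun j : ℕ => (j : ℝ) * |b j|)) (θ : ℝ) :
    HasSum (fun j : ℕ => b j / j * (Real.sin (j * θ) - j * θ)) (phi b θ).im := by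
  have := Complex.hasSum_im (phiT_summable hs θ).hasSum
  simp_rw [phiT_im] at this
  exact this

lemma phi_continuousOn {b : ℕ → ℝ} (hs : Summable (fun j : ℕ => (j : ℝ) * |b j|)) :
    ContinuousOn (phi b) (Set.Icc (-π) π) := by
  have : phi b = fun θ => ∑' j, phiT b θ j := rfl
  rw [this]
  refine continuousOn_tsum (u := fun j : ℕ => 2 * π ^ 2 * (j * |b j|)) ?_ (hs.mul_left _) ?_
  · intro j
    unfold phiT
    fun_prop
  · intro j θ hθ
    refine (phiT_norm b θ j).trans ?_
    have : θ ^ 2 ≤ π ^ 2 := sq_le_sq' hθ.1 hθ.2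
    gcongr

lemma phi_re_upper {b : ℕ → ℝ} (hb : ∀ j, 0 ≤ b j) (hs : Summable (fun j : ℕ => (j : ℝ) * |b j|))
    (m : ℕ) (hm : 2 ≤ m) (K : ℝ) (hK : 0 ≤ K) (h1 : K ≤ b m) (h2 : K ≤ b (m - 1)) (θ : ℝ) (hθ : |θ| ≤ π) :
    (phi b θ).re ≤ -(K / m * (θ ^ 2 / π ^ 2)) := by
  have h := (phi_re hs θ).neg
  have hnn : ∀ j : ℕ, 0 ≤ - -(b j / j * (1 - Real.cos (j * θ))) := by
    intro j
    rw [neg_neg]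
    have := hb j
    have := Real.cos_le_one (j * θ)
    have : 0 ≤ 1 - Real.cos (j * θ) := by linarith
    positivity
  have hle := h.summable.sum_le_tsum {m, m - 1} (fun j _ => hnn j)
  rw [h.tsum_eq, Finset.sum_pair (by omega)] at hle
  simp only [neg_neg] at hle
  have hm0 : (0 : ℝ) < m := by positivity
  have hm1 : (0 : ℝ) < (m - 1 : ℕ) := by exact_mod_cast (by omega : 0 < m - 1)
  have hm1' : ((m - 1 : ℕ) : ℝ) ≤ m := by exact_mod_cast (by omega)
  have e1 : K / m ≤ b m / m := by gcongr
  have e2 : K / m ≤ b (m - 1) / (m - 1 : ℕ) := by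
    calc K / m ≤ K / (m - 1 : ℕ) := by gcongr
      _ ≤ _ := by gcongr
  have c1 : 0 ≤ 1 - Real.cos (m * θ) := by linarith [Real.cos_le_one (m * θ)]
  have c2 : 0 ≤ 1 - Real.cos ((m - 1 : ℕ) * θ) := by linarith [Real.cos_le_one ((m - 1 : ℕ) * θ)]
  have c3 := cos_two_lower (m * θ) ((m - 1 : ℕ) * θ)
  have e3 : (m : ℝ) * θ - (m - 1 : ℕ) * θ = θ := by
    rw [Nat.cast_sub (by omega)]; push_cast; ring
  rw [e3] at c3
  have c4 := Real.cos_le_one_sub_mul_cos_sq hθ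
  have c5 : θ ^ 2 / π ^ 2 ≤ (1 - Real.cos (m * θ)) + (1 - Real.cos ((m - 1 : ℕ) * θ)) := by
    have : 2 / π ^ 2 * θ ^ 2 = 2 * (θ ^ 2 / π ^ 2) := by ring
    linarith
  have := mul_le_mul_of_nonneg_right e1 c1
  have := mul_le_mul_of_nonneg_right e2 c2
  have := mul_le_mul_of_nonneg_left c5 (show 0 ≤ K / m by positivity)
  rw [mul_add] at this
  linarith

lemma phi_re_lower {b : ℕ → ℝ} (hb : ∀ j, 0 ≤ b j) (hs : Summable (fun j : ℕ => (j : ℝ) * |b j|))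
    (V : ℝ) (hV : ∑' j : ℕ, (j : ℝ) * |b j| ≤ V) (θ : ℝ) :
    -(θ ^ 2 / 2 * V) ≤ (phi b θ).re := by
  have h := phi_re hs θ
  have h2 := (hs.hasSum.mul_left (θ ^ 2 / 2)).neg
  have := hasSum_le (fun j => ?_) h2 h
  · refine le_trans ?_ this
    have : 0 ≤ θ ^ 2 / 2 := by positivity
    nlinarith
  · have h3 : 1 - (j * θ) ^ 2 / 2 ≤ Real.cos (j * θ) := Real.one_sub_sq_div_two_le_cos
    apply neg_le_neg
    rw [abs_of_nonneg (hb j)]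
    have hbj := hb j
    calc b j / j * (1 - Real.cos (j * θ)) ≤ b j / j * ((j * θ) ^ 2 / 2) := by
          gcongr; linarith
      _ = θ ^ 2 / 2 * (j * b j) := by
          rcases Nat.eq_zero_or_pos j with h | h
          · simp [h]
          · field_simp

lemma phi_im_bound {b : ℕ → ℝ} (hb : ∀ j, 0 ≤ b j) (hs : Summable (fun j : ℕ => (j : ℝ) * |b j|))
    (hs2 : Summable (fun j : ℕ => (j : ℝ) ^ 2 * b j))
    (M : ℝ) (hM : ∑' j : ℕ, (j : ℝ) ^ 2 * b j ≤ M) (θ : ℝ) :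
    |(phi b θ).im| ≤ |θ| ^ 3 * M := by
  have h := phi_im hs θ
  rw [← h.tsum_eq, ← Real.norm_eq_abs]
  refine (tsum_of_norm_bounded (hs2.hasSum.mul_left (|θ| ^ 3)) (fun j => ?_)).trans ?_
  · rw [norm_mul, Real.norm_eq_abs, Real.norm_eq_abs, abs_div, Nat.abs_cast, abs_of_nonneg (hb j)]
    have hbj := hb j
    calc b j / j * |Real.sin (j * θ) - j * θ| ≤ b j / j * |j * θ| ^ 3 := by
          gcongr; exact abs_sin_sub_self_le _
      _ = |θ| ^ 3 * (j ^ 2 * b j) := by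
          rw [abs_mul, Nat.abs_cast]
          rcases Nat.eq_zero_or_pos j with h | h
          · simp [h]
          · field_simp
  · gcongr

lemma phi_diff {b b' : ℕ → ℝ} (hs : Summable (fun j : ℕ => (j : ℝ) * |b j|))
    (hs' : Summable (fun j : ℕ => (j : ℝ) * |b' j|))
    (hd : Summable (fun j : ℕ => (j : ℝ) * |b' j - b j|))
    (D : ℝ) (hD : ∑' j : ℕ, (j : ℝ) * |b' j - b j| ≤ D) (θ : ℝ) :
    ‖phi b' θ - phi b θ‖ ≤ 2 * θ ^ 2 * D := by
  rw [phi_eq, phi_eq, ← (phiT_summable hs' θ).tsum_sub (phiT_summable hs θ)]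
  refine (tsum_of_norm_bounded (hd.hasSum.mul_left (2 * θ ^ 2)) (fun j => ?_)).trans ?_
  · have := phiT_norm (fun j => b' j - b j) θ j
    refine le_trans (le_of_eq ?_) this
    congr 1
    simp only [phiT]
    push_cast
    ring
  · gcongr

lemma ratio_integrals {b b' : ℕ → ℝ} (hb : ∀ j, 0 ≤ b j) (hb' : ∀ j, 0 ≤ b' j)
    (hs : Summable (fun j : ℕ => (j : ℝ) * |b j|))
    (hs' : Summable (fun j : ℕ => (j : ℝ) * |b' j|))
    (hd : Summable (fun j : ℕ => (j : ℝ) * |b' j - b j|))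
    (hs2 : Summable (fun j : ℕ => (j : ℝ) ^ 2 * b j))
    (V M D K T η : ℝ) (hV0 : 0 < V) (hV : ∑' j : ℕ, (j : ℝ) * |b j| ≤ V)
    (hM : ∑' j : ℕ, (j : ℝ) ^ 2 * b j ≤ M) (hD : ∑' j : ℕ, (j : ℝ) * |b' j - b j| ≤ D)
    (m : ℕ) (hm : 2 ≤ m) (hK : 0 ≤ K) (h1 : K ≤ b m) (h2 : K ≤ b (m - 1))
    (h1' : K ≤ b' m) (h2' : K ≤ b' (m - 1))
    (hT : 0 < T) (hTpi : T ≤ π) (hTV : 1 ≤ T ^ 2 * V) (hTM : T ^ 3 * M ≤ 1)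
    (hTD : 2 * T ^ 2 * D ≤ η) (hη : η ≤ 1 / 4)
    (htail : 2 * π * Real.exp (-(K / m * (T ^ 2 / π ^ 2))) ≤ η * (√V)⁻¹) :
    ‖(∫ θ in (-π)..π, Complex.exp (phi b' θ)) - ∫ θ in (-π)..π, Complex.exp (phi b θ)‖ ≤
      16 * η * ‖∫ θ in (-π)..π, Complex.exp (phi b θ)‖ := by
  have hpi := Real.pi_pos
  have hM0 : 0 ≤ M := le_trans (tsum_nonneg (fun j => mul_nonneg (by positivity) (hb j))) hM
  have hD0 : 0 ≤ D := le_trans (tsum_nonneg (fun j => by positivity)) hD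
  have hη0 : 0 ≤ η := le_trans (by positivity) hTD
  set f : ℝ → ℂ := fun θ => Complex.exp (phi b θ) with hf
  set f' : ℝ → ℂ := fun θ => Complex.exp (phi b' θ) with hf'
  have cf : ContinuousOn f (Set.Icc (-π) π) := Complex.continuous_exp.comp_continuousOn (phi_continuousOn hs)
  have cf' : ContinuousOn f' (Set.Icc (-π) π) := Complex.continuous_exp.comp_continuousOn (phi_continuousOn hs')
  have sub : ∀ u v : ℝ, -π ≤ u → u ≤ π → -π ≤ v → v ≤ π → Set.uIcc u v ⊆ Set.Icc (-π) π := by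
    intro u v hu hu' hv hv'
    exact Set.uIcc_subset_Icc ⟨hu, hu'⟩ ⟨hv, hv'⟩
  have tail : ∀ (c : ℕ → ℝ), (∀ j, 0 ≤ c j) → Summable (fun j : ℕ => (j : ℝ) * |c j|) → K ≤ c m → K ≤ c (m - 1) →
      ‖(∫ θ in (-π)..π, Complex.exp (phi c θ)) - ∫ θ in (-T)..T, Complex.exp (phi c θ)‖ ≤ η * (√V)⁻¹ := by
    intro c hc hcs hc1 hc2
    have cc : ContinuousOn (fun θ => Complex.exp (phi c θ)) (Set.Icc (-π) π) :=
      Complex.continuous_exp.comp_continuousOn (phi_continuousOn hcs)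
    have i1 : IntervalIntegrable (fun θ => Complex.exp (phi c θ)) MeasureTheory.volume (-π) (-T) :=
      (cc.mono (sub _ _ (by linarith) (by linarith) (by linarith) (by linarith))).intervalIntegrable
    have i2 : IntervalIntegrable (fun θ => Complex.exp (phi c θ)) MeasureTheory.volume (-T) T :=
      (cc.mono (sub _ _ (by linarith) (by linarith) (by linarith) (by linarith))).intervalIntegrable
    have i3 : IntervalIntegrable (fun θ => Complex.exp (phi c θ)) MeasureTheory.volume T π :=
      (cc.mono (sub _ _ (by linarith) (by linarith) (by linarith) (by linarith))).intervalIntegrable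
    have e : (∫ θ in (-π)..π, Complex.exp (phi c θ)) - ∫ θ in (-T)..T, Complex.exp (phi c θ)
        = (∫ θ in (-π)..(-T), Complex.exp (phi c θ)) + ∫ θ in T..π, Complex.exp (phi c θ) := by
      rw [← intervalIntegral.integral_add_adjacent_intervals (i1.trans i2) i3,
        ← intervalIntegral.integral_add_adjacent_intervals i1 i2]
      ring
    rw [e]
    have bd : ∀ θ : ℝ, |θ| ≤ π → T ≤ |θ| → ‖Complex.exp (phi c θ)‖ ≤ Real.exp (-(K / m * (T ^ 2 / π ^ 2))) := by
      intro θ hθ hTθ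
      rw [Complex.norm_exp]
      refine Real.exp_le_exp.2 ((phi_re_upper hc hcs m hm K hK hc1 hc2 θ hθ).trans ?_)
      have : T ^ 2 ≤ θ ^ 2 := by rw [← sq_abs θ]; gcongr
      gcongr
    have b1 := intervalIntegral.norm_integral_le_of_norm_le_const (a := -π) (b := -T)
      (f := fun θ => Complex.exp (phi c θ)) (C := Real.exp (-(K / m * (T ^ 2 / π ^ 2)))) (by
        intro θ hθ
        rw [Set.uIoc_of_le (by linarith)] at hθ
        apply bd θ
        · rw [abs_le]; constructor <;> linarith [hθ.1, hθ.2]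
        · rw [abs_of_neg (by linarith [hθ.2])]; linarith [hθ.2])
    have b2 := intervalIntegral.norm_integral_le_of_norm_le_const (a := T) (b := π)
      (f := fun θ => Complex.exp (phi c θ)) (C := Real.exp (-(K / m * (T ^ 2 / π ^ 2)))) (by
        intro θ hθ
        rw [Set.uIoc_of_le (by linarith)] at hθ
        apply bd θ
        · rw [abs_le]; constructor <;> linarith [hθ.1, hθ.2]
        · rw [abs_of_pos (by linarith [hθ.1])]; linarith [hθ.1])
    rw [abs_of_nonneg (by linarith)] at b1 b2
    refine (norm_add_le _ _).trans ?_
    have := Real.exp_pos (-(K / m * (T ^ 2 / π ^ 2)))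
    have : 0 < Real.exp (-(K / m * (T ^ 2 / π ^ 2))) * T := by positivity
    nlinarith
  have t1 := tail b hb hs h1 h2
  have t2 := tail b' hb' hs' h1' h2'
  have subT := sub (-T) T (by linarith) (by linarith) (by linarith) (by linarith)
  have if1 : IntervalIntegrable f MeasureTheory.volume (-T) T := (cf.mono subT).intervalIntegrable
  have if2 : IntervalIntegrable f' MeasureTheory.volume (-T) T := (cf'.mono subT).intervalIntegrable
  have ifn : IntervalIntegrable (fun θ => ‖f θ‖) MeasureTheory.volume (-T) T := if1.norm
  set J : ℝ := ∫ θ in (-T)..T, ‖f θ‖ with hJ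
  -- lower bound for J
  have hsV : 0 < √V := Real.sqrt_pos.2 hV0
  have hJlow : (√V)⁻¹ ≤ J := by
    set r := (√V)⁻¹ with hr
    have hr0 : 0 < r := by positivity
    have hr2 : r ^ 2 * V = 1 := by
      rw [hr, inv_pow, Real.sq_sqrt hV0.le]; field_simp
    have hrT : r ≤ T := by
      have : r ^ 2 ≤ T ^ 2 := by
        have : r ^ 2 * V ≤ T ^ 2 * V := by linarith
        exact le_of_mul_le_mul_right this hV0
      exact (pow_le_pow_iff_left₀ hr0.le hT.le (by norm_num)).1 this
    have step : ∫ θ in (-r)..r, (1 / 2 : ℝ) ≤ ∫ θ in (-r)..r, ‖f θ‖ := by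
      apply intervalIntegral.integral_mono_on (by linarith) (by simp)
      · exact ((cf.mono (sub _ _ (by linarith) (by linarith) (by linarith) (by linarith))).intervalIntegrable).norm
      · intro θ hθ
        rw [hf]
        simp only [Complex.norm_exp]
        have l := phi_re_lower hb hs V hV θ
        have hθ2 : θ ^ 2 ≤ r ^ 2 := sq_le_sq' hθ.1 hθ.2
        have : θ ^ 2 / 2 * V ≤ 1 / 2 := by nlinarith
        have h3 := Real.add_one_le_exp ((phi b θ).re)
        linarith
    have step2 : ∫ θ in (-r)..r, ‖f θ‖ ≤ J := by
      apply intervalIntegral.integral_mono_interval (by linarith) (by linarith) hrT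
      · exact Filter.Eventually.of_forall (fun θ => norm_nonneg _)
      · exact ifn
    simp only [intervalIntegral.integral_const, smul_eq_mul] at step
    linarith
  have hJ0 : 0 < J := lt_of_lt_of_le (by positivity) hJlow
  have t1' : η * (√V)⁻¹ ≤ η * J := by gcongr
  -- real part
  have hre : J / 2 ≤ (∫ θ in (-T)..T, f θ).re := by
    have e : (∫ θ in (-T)..T, f θ).re = ∫ θ in (-T)..T, (f θ).re := by
      have := Complex.reCLM.intervalIntegral_comp_comm if1
      simpa using this.symm
    rw [e, hJ, ← intervalIntegral.integral_div]
    apply intervalIntegral.integral_mono_on (by linarith)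
    · exact ifn.div_const 2
    · exact (Complex.continuous_re.comp_continuousOn (cf.mono subT)).intervalIntegrable
    · intro θ hθ
      simp only [hf, Complex.norm_exp, Complex.exp_re]
      have hi := phi_im_bound hb hs hs2 M hM θ
      have hθT : |θ| ≤ T := abs_le.2 hθ
      have : |θ| ^ 3 * M ≤ 1 := le_trans (by gcongr) hTM
      have hi1 : |(phi b θ).im| ≤ 1 := hi.trans this
      have hc : 1 / 2 ≤ Real.cos (phi b θ).im := by
        have h4 : 1 - (phi b θ).im ^ 2 / 2 ≤ Real.cos (phi b θ).im := Real.one_sub_sq_div_two_le_cos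
        have : (phi b θ).im ^ 2 ≤ 1 := by rw [← sq_abs]; nlinarith [abs_nonneg (phi b θ).im]
        linarith
      have := Real.exp_pos (phi b θ).re
      nlinarith
  have hdiff : ‖(∫ θ in (-T)..T, f' θ) - ∫ θ in (-T)..T, f θ‖ ≤ 2 * η * J := by
    rw [← intervalIntegral.integral_sub if2 if1, hJ, ← intervalIntegral.integral_const_mul]
    apply intervalIntegral.norm_integral_le_of_norm_le (by linarith)
    · refine Filter.Eventually.of_forall (fun θ hθ => ?_)
      have hd1 := phi_diff hs hs' hd D hD θ
      have hθ2 : θ ^ 2 ≤ T ^ 2 := sq_le_sq' hθ.1.le hθ.2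
      have hd2 : ‖phi b' θ - phi b θ‖ ≤ η := by
        refine hd1.trans (le_trans ?_ hTD)
        gcongr
      have e : f' θ - f θ = f θ * (Complex.exp (phi b' θ - phi b θ) - 1) := by
        simp only [hf, hf']
        rw [mul_sub, ← Complex.exp_add]; ring_nf
      rw [e, norm_mul, mul_comm]
      have := Complex.norm_exp_sub_one_le (x := phi b' θ - phi b θ) (by linarith)
      gcongr
      linarith
    · exact ifn.const_mul _
  set I1 := ∫ θ in (-π)..π, f θ
  set I2 := ∫ θ in (-π)..π, f' θ
  set S1 := ∫ θ in (-T)..T, f θ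
  set S2 := ∫ θ in (-T)..T, f' θ
  have hS1 : J / 2 ≤ ‖S1‖ := hre.trans (Complex.re_le_norm _)
  have hI1 : J / 4 ≤ ‖I1‖ := by
    have := norm_sub_norm_le S1 (S1 - I1)
    rw [sub_sub_cancel, norm_sub_rev] at this
    have : η * J ≤ J / 4 := by nlinarith
    linarith
  have : I2 - I1 = (I2 - S2) - (I1 - S1) + (S2 - S1) := by ring
  rw [this]
  have n1 := norm_add_le ((I2 - S2) - (I1 - S1)) (S2 - S1)
  have n2 := norm_sub_le (I2 - S2) (I1 - S1)
  have : 16 * η * (J / 4) ≤ 16 * η * ‖I1‖ := by gcongr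
  linarith

end PartB


section PartC

/-- multisets of parts in `[1,m]` with sum `n` -/
noncomputable def Lam (n m : ℕ) : Finset (Multiset ℕ) :=
  ((Finset.univ : Finset n.Partition).image (fun l => l.parts)).filter (fun l => ∀ i ∈ l, i ≤ m)

lemma mem_Lam {n m : ℕ} {l : Multiset ℕ} : l ∈ Lam n m ↔ l.sum = n ∧ ∀ i ∈ l, 1 ≤ i ∧ i ≤ m := by
  rw [Lam, Finset.mem_filter, Finset.mem_image]
  constructor
  · rintro ⟨⟨P, _, rfl⟩, h⟩
    exact ⟨P.parts_sum, fun i hi => ⟨P.parts_pos hi, h i hi⟩⟩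
  · rintro ⟨h1, h2⟩
    exact ⟨⟨⟨l, fun {i} hi => (h2 i hi).1, h1⟩, Finset.mem_univ _, rfl⟩, fun i hi => (h2 i hi).2⟩

/-- denominators -/
def wden (l : Multiset ℕ) : ℕ := l.prod * ∏ i ∈ l.toFinset, (l.count i).factorial

lemma wden_eq (l : Multiset ℕ) (S : Finset ℕ) (hS : l.toFinset ⊆ S) :
    wden l = l.prod * ∏ i ∈ S, (l.count i).factorial := by
  rw [wden]
  congr 1
  apply Finset.prod_subset hS
  intro i _ hi
  rw [Multiset.count_eq_zero_of_notMem (by simpa using hi)]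
  rfl

lemma wden_pos (l : Multiset ℕ) (hl : ∀ i ∈ l, 1 ≤ i) : 0 < wden l := by
  rw [wden]
  apply Nat.mul_pos
  · apply Nat.pos_of_ne_zero
    intro h
    rw [Multiset.prod_eq_zero_iff] at h
    have := hl 0 h
    omega
  · exact Finset.prod_pos (fun i _ => Nat.factorial_pos _)

lemma wden_cons (i : ℕ) (l : Multiset ℕ) : wden (i ::ₘ l) = i * (l.count i + 1) * wden l := by
  set S := insert i l.toFinset with hS
  rw [wden_eq l S (by simp [hS]), wden_eq (i ::ₘ l) S (by simp [hS]), Multiset.prod_cons,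
    ← Finset.mul_prod_erase S _ (show i ∈ S by simp [hS]),
    ← Finset.mul_prod_erase S (fun j => (l.count j).factorial) (show i ∈ S by simp [hS])]
  have : ∀ j ∈ S.erase i, (Multiset.count j (i ::ₘ l)).factorial = (l.count j).factorial := by
    intro j hj
    rw [Multiset.count_cons_of_ne (Finset.ne_of_mem_erase hj)]
  rw [Finset.prod_congr rfl this, Multiset.count_cons_self, Nat.factorial_succ]
  ring

lemma card_parts_eq {n m : ℕ} (l : Multiset ℕ) (hl : l ∈ Lam n m) :
    (((Finset.univ : Finset (Equiv.Perm (Fin n))).filter (fun σ => σ.partition.parts = l)).card : ℝ)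
      = (n.factorial : ℝ) / (wden l : ℝ) := by
  classical
  obtain ⟨hl1, hl2⟩ := mem_Lam.1 hl
  set μ := l.filter (fun n => 2 ≤ n) with hμ
  have hdec : l = μ + Multiset.replicate (l.count 1) 1 := by
    conv_lhs => rw [← Multiset.filter_add_not (fun n => 2 ≤ n) l]
    congr 1
    rw [← Multiset.filter_eq']
    apply Multiset.filter_congr
    intro x hx
    have := (hl2 x hx).1
    omega
  have hsum : μ.sum + l.count 1 = n := by
    have := congrArg Multiset.sum hdec
    rw [Multiset.sum_add, Multiset.sum_replicate, hl1] at this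
    simpa using this.symm
  have hset : (Finset.univ : Finset (Equiv.Perm (Fin n))).filter (fun σ => σ.partition.parts = l)
      = (Finset.univ : Finset (Equiv.Perm (Fin n))).filter (fun σ => σ.cycleType = μ) := by
    ext σ
    simp only [Finset.mem_filter, Finset.mem_univ, true_and]
    constructor
    · intro h
      rw [← Equiv.Perm.filter_parts_partition_eq_cycleType, h]
    · intro h
      rw [Equiv.Perm.parts_partition, h, hdec, ← Equiv.Perm.sum_cycleType, h, ← hdec, Fintype.card_fin,
        show n - μ.sum = l.count 1 by omega]
      exact hdec.symm
  have hcard := Equiv.Perm.card_of_cycleType_mul_eq (Fin n) μ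
  rw [if_pos ⟨by rw [Fintype.card_fin]; omega, fun a ha => by
    simpa using (Multiset.mem_filter.1 ha).2⟩, Fintype.card_fin] at hcard
  have hw : (n - μ.sum).factorial * μ.prod * (∏ i ∈ μ.toFinset, (μ.count i).factorial) = wden l := by
    have h1 : (1 : ℕ) ∉ μ.toFinset := by simp [hμ]
    have hsub : l.toFinset ⊆ insert 1 μ.toFinset := by
      intro x hx
      rw [Multiset.mem_toFinset] at hx
      have := (hl2 x hx).1
      rw [Finset.mem_insert, Multiset.mem_toFinset, hμ, Multiset.mem_filter]
      by_cases h : x = 1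
      · exact Or.inl h
      · exact Or.inr ⟨hx, by omega⟩
    rw [wden_eq l _ hsub, Finset.prod_insert h1, show n - μ.sum = l.count 1 by omega]
    have hp : l.prod = μ.prod := by
      conv_lhs => rw [hdec]
      simp
    have hc : ∀ i ∈ μ.toFinset, (μ.count i).factorial = (l.count i).factorial := by
      intro i hi
      rw [Multiset.mem_toFinset, hμ, Multiset.mem_filter] at hi
      rw [hμ, Multiset.count_filter_of_pos hi.2]
    rw [hp, Finset.prod_congr rfl hc]
    ring
  rw [hw] at hcard
  rw [hset]
  have hpos : (0 : ℝ) < wden l := by exact_mod_cast wden_pos l (fun i hi => (hl2 i hi).1)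
  rw [eq_div_iff hpos.ne']
  exact_mod_cast hcard

lemma permProb_eq (n m : ℕ) (hm : 1 ≤ m) : permProb n m = ∑ l ∈ Lam n m, (1 : ℝ) / (wden l : ℝ) := by
  classical
  have hn : (n.factorial : ℝ) ≠ 0 := by exact_mod_cast n.factorial_ne_zero
  rw [permProb, div_eq_iff hn, Finset.sum_mul, Nat.card_eq_fintype_card, Fintype.card_subtype]
  rw [Finset.card_eq_sum_card_fiberwise (f := fun σ : Equiv.Perm (Fin n) => σ.partition.parts) (t := Lam n m)]
  · push_cast
    apply Finset.sum_congr rfl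
    intro l hl
    rw [div_mul_eq_mul_div, one_mul, ← card_parts_eq l hl, Finset.filter_filter]
    congr 2
    ext σ
    simp only [Finset.mem_filter, Finset.mem_univ, true_and, and_iff_right_iff_imp]
    rintro rfl c hc
    rw [← Equiv.Perm.filter_parts_partition_eq_cycleType, Multiset.mem_filter] at hc
    exact ((mem_Lam.1 hl).2 c hc.1).2
  · intro σ hσ
    simp only [Finset.coe_filter, Finset.mem_univ, true_and, Set.mem_ofPred_eq] at hσ
    rw [SetLike.mem_coe, mem_Lam]
    refine ⟨by simpa using σ.partition.parts_sum, fun i hi => ⟨σ.partition.parts_pos hi, ?_⟩⟩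
    simp only [Equiv.Perm.parts_partition, Multiset.mem_add] at hi
    rcases hi with hi | hi
    · exact hσ i hi
    · rw [Multiset.eq_of_mem_replicate hi]; exact hm

lemma permProb_zero (m : ℕ) (hm : 1 ≤ m) : permProb 0 m = 1 := by
  rw [permProb_eq 0 m hm]
  have : Lam 0 m = {0} := by
    ext l
    rw [mem_Lam, Finset.mem_singleton]
    constructor
    · rintro ⟨h1, h2⟩
      apply Multiset.eq_zero_of_forall_notMem
      intro a ha
      have h3 := Multiset.single_le_sum (fun _ _ => Nat.zero_le _) a ha
      have := (h2 a ha).1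
      omega
    · rintro rfl; simp
  rw [this]
  simp [wden]

lemma permProb_pos (n m : ℕ) (hm : 1 ≤ m) : 0 < permProb n m := by
  rw [permProb_eq n m hm]
  apply Finset.sum_pos
  · intro l hl
    have : (0 : ℝ) < wden l := by exact_mod_cast wden_pos l (fun i hi => ((mem_Lam.1 hl).2 i hi).1)
    positivity
  · exact ⟨Multiset.replicate n 1, mem_Lam.2 ⟨by simp, fun i hi => by
      rw [Multiset.eq_of_mem_replicate hi]; exact ⟨le_rfl, hm⟩⟩⟩

lemma permProb_rec (m : ℕ) (hm : 1 ≤ m) (n : ℕ) :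
    ((n : ℝ) + 1) * permProb (n + 1) m =
      ∑ k ∈ Finset.range (n + 1), (if k + 1 ≤ m then (1 : ℝ) else 0) * permProb (n - k) m := by
  simp_rw [permProb_eq _ m hm]
  have h1 : ∀ l ∈ Lam (n + 1) m, ((n : ℝ) + 1) * (1 / (wden l : ℝ)) =
      ∑ i ∈ l.toFinset, (1 : ℝ) / (wden (l.erase i) : ℝ) := by
    intro l hl
    obtain ⟨hs, hl2⟩ := mem_Lam.1 hl
    have : ((n : ℝ) + 1) = ∑ i ∈ l.toFinset, (l.count i : ℝ) * i := by
      have := Finset.sum_multiset_count l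
      rw [hs] at this
      simp only [smul_eq_mul] at this
      exact_mod_cast this
    rw [this, Finset.sum_mul]
    apply Finset.sum_congr rfl
    intro i hi
    rw [Multiset.mem_toFinset] at hi
    have hi1 := (hl2 i hi).1
    have hw := wden_cons i (l.erase i)
    rw [Multiset.cons_erase hi, Multiset.count_erase_self,
      Nat.sub_add_cancel (Multiset.one_le_count_iff_mem.2 hi)] at hw
    have hp : (0 : ℝ) < wden (l.erase i) := by
      exact_mod_cast wden_pos _ (fun j hj => (hl2 j (Multiset.mem_of_mem_erase hj)).1)
    have hc : (0 : ℝ) < l.count i := by exact_mod_cast Multiset.count_pos.2 hi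
    have hi0 : (0 : ℝ) < i := by exact_mod_cast hi1
    rw [hw]
    push_cast
    field_simp
  rw [Finset.mul_sum, Finset.sum_congr rfl h1]
  simp_rw [ite_mul, one_mul, zero_mul]
  rw [← Finset.sum_filter, Finset.sum_sigma', Finset.sum_sigma']
  refine Finset.sum_bij' (fun x _ => ⟨x.2 - 1, x.1.erase x.2⟩) (fun y _ => ⟨(y.1 + 1) ::ₘ y.2, y.1 + 1⟩) ?_ ?_ ?_ ?_ ?_
  · rintro ⟨l, i⟩ hx
    rw [Finset.mem_sigma] at hx
    obtain ⟨hl, hi⟩ := hx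
    simp only at hl hi
    obtain ⟨hs, hl2⟩ := mem_Lam.1 hl
    rw [Multiset.mem_toFinset] at hi
    have hi1 := hl2 i hi
    have hsum : (l.erase i).sum + i = n + 1 := by
      have := congrArg Multiset.sum (Multiset.cons_erase hi)
      rw [Multiset.sum_cons, hs] at this
      omega
    rw [Finset.mem_sigma, Finset.mem_filter, Finset.mem_range, mem_Lam]
    simp only
    refine ⟨⟨by omega, by omega⟩, by omega, fun j hj => hl2 j (Multiset.mem_of_mem_erase hj)⟩
  · rintro ⟨k, l⟩ hx
    rw [Finset.mem_sigma, Finset.mem_filter, Finset.mem_range, mem_Lam] at hx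
    simp only at hx
    obtain ⟨⟨h1, h2⟩, h3, h4⟩ := hx
    rw [Finset.mem_sigma, mem_Lam]
    simp only [Multiset.sum_cons, Multiset.mem_cons, Multiset.mem_toFinset]
    refine ⟨⟨by omega, ?_⟩, Or.inl trivial⟩
    rintro i (rfl | hi)
    · exact ⟨by omega, h2⟩
    · exact h4 i hi
  · rintro ⟨l, i⟩ hx
    rw [Finset.mem_sigma] at hx
    obtain ⟨hl, hi⟩ := hx
    simp only at hl hi
    rw [Multiset.mem_toFinset] at hi
    have hi1 := (mem_Lam.1 hl).2 i hi
    simp only [Nat.sub_add_cancel hi1.1, Multiset.cons_erase hi]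
  · rintro ⟨k, l⟩ hx
    simp
  · rintro ⟨l, i⟩ hx
    rfl

end PartC


section PolyPart
open Polynomial
variable {F : Type} [Field F] [Fintype F]

lemma finite_monic_deg (n : ℕ) : Finite {p : F[X] // p.Monic ∧ p.natDegree = n} := by
  have e := (Polynomial.monicEquivDegreeLT (R := F) n).trans
    (Polynomial.degreeLTEquiv F n).toEquiv
  exact Finite.of_equiv _ e.symm

lemma card_monic_deg (n : ℕ) :
    Nat.card {p : F[X] // p.Monic ∧ p.natDegree = n} = Fintype.card F ^ n := by
  have e := (Polynomial.monicEquivDegreeLT (R := F) n).trans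
    (Polynomial.degreeLTEquiv F n).toEquiv
  rw [Nat.card_congr e]
  simp

lemma irr_finite (m : ℕ) :
    {p : F[X] | p.Monic ∧ Irreducible p ∧ p.natDegree ≤ m}.Finite := by
  have : {p : F[X] | p.Monic ∧ Irreducible p ∧ p.natDegree ≤ m} ⊆
      ⋃ i ∈ Finset.range (m+1), {p : F[X] | p.Monic ∧ p.natDegree = i} := by
    rintro p ⟨h1, h2, h3⟩
    simp only [Set.mem_iUnion, Finset.mem_range]
    exact ⟨p.natDegree, by omega, h1, rfl⟩
  refine Set.Finite.subset ?_ this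
  refine Set.Finite.biUnion (Finset.finite_toSet _) ?_
  intro i _
  have := finite_monic_deg (F := F) i
  exact Set.finite_coe_iff.mp this

/-- monic irreducibles of degree at most m -/
noncomputable def Irr (F : Type) [Field F] [Fintype F] (m : ℕ) : Finset (F[X]) := (irr_finite (F := F) m).toFinset

lemma mem_Irr {m : ℕ} {p : F[X]} : p ∈ Irr F m ↔ p.Monic ∧ Irreducible p ∧ p.natDegree ≤ m := by
  simp [Irr]

/-- set of monic polynomials with irreducible factors in S -/
def frS (S : Finset F[X]) (n : ℕ) : Set F[X] :=
  {f | f.Monic ∧ f.natDegree = n ∧ ∀ p : F[X], p.Monic → Irreducible p → p ∣ f → p ∈ S}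

lemma frS_finite (S : Finset F[X]) (n : ℕ) : (frS S n).Finite := by
  have := finite_monic_deg (F := F) n
  refine Set.Finite.subset (s := {p : F[X] | p.Monic ∧ p.natDegree = n}) (Set.finite_coe_iff.mp this) ?_
  rintro f ⟨h1, h2, _⟩
  exact ⟨h1, h2⟩

noncomputable def cS (S : Finset F[X]) : PowerSeries ℚ := PowerSeries.mk fun n => ((frS S n).ncard : ℚ)

lemma frS_empty (n : ℕ) : (frS (∅ : Finset F[X]) n) = if n = 0 then {1} else ∅ := by
  ext f
  constructor
  · rintro ⟨h1, h2, h3⟩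
    have hf : f = 1 := by
      by_contra h
      have hu : ¬ IsUnit f := fun hu => h (h1.eq_one_of_isUnit hu)
      obtain ⟨g, hg1, hg2, hg3⟩ := Polynomial.exists_monic_irreducible_factor f hu
      simpa using h3 g hg1 hg2 hg3
    subst hf
    simp at h2
    simp [← h2]
  · split_ifs with h
    · rintro rfl
      refine ⟨monic_one, by simp [h], ?_⟩
      intro p hp hi hd
      exact absurd (isUnit_of_dvd_one hd) hi.not_isUnit
    · simp

lemma frS_insert [DecidableEq F[X]] (S : Finset F[X]) (P : F[X]) (hP : P.Monic) (hi : Irreducible P) (hPS : P ∉ S)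
    (n : ℕ) :
    (frS (insert P S) n).ncard = (frS S n).ncard +
      if P.natDegree ≤ n then (frS (insert P S) (n - P.natDegree)).ncard else 0 := by
  have h1 : frS (insert P S) n = frS S n ∪ {f ∈ frS (insert P S) n | P ∣ f} := by
    ext f
    constructor
    · intro hf
      by_cases hd : P ∣ f
      · exact Or.inr ⟨hf, hd⟩
      · left
        refine ⟨hf.1, hf.2.1, fun p h1 h2 h3 => ?_⟩
        have := hf.2.2 p h1 h2 h3
        rw [Finset.mem_insert] at this
        rcases this with rfl | h
        · exact absurd h3 hd
        · exact h
    · rintro (hf | hf)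
      · exact ⟨hf.1, hf.2.1, fun p h1 h2 h3 => Finset.mem_insert_of_mem (hf.2.2 p h1 h2 h3)⟩
      · exact hf.1
  have h2 : Disjoint (frS S n) {f ∈ frS (insert P S) n | P ∣ f} := by
    rw [Set.disjoint_left]
    rintro f hf ⟨_, hd⟩
    exact hPS (hf.2.2 P hP hi hd)
  rw [h1, Set.ncard_union_eq h2 (frS_finite _ _) ((frS_finite _ _).subset (fun f hf => hf.1))]
  congr 1
  split_ifs with hn
  · symm
    rw [← Set.ncard_image_of_injective (f := fun g : F[X] => P * g) _
      (mul_right_injective₀ hP.ne_zero)]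
    congr 1
    ext f
    constructor
    · rintro ⟨g, hg, rfl⟩
      refine ⟨⟨hP.mul hg.1, ?_, ?_⟩, dvd_mul_right _ _⟩
      · rw [hP.natDegree_mul hg.1, hg.2.1]; omega
      · intro p h1 h2 h3
        rcases h2.prime.dvd_or_dvd h3 with h | h
        · have : p = P := eq_of_monic_of_associated h1 hP
            (h2.associated_of_dvd hi h)
          simp [this]
        · exact hg.2.2 p h1 h2 h
    · rintro ⟨hf, g, rfl⟩
      have hg : g.Monic := hP.of_mul_monic_left hf.1
      refine ⟨g, ⟨hg, ?_, fun p h1 h2 h3 => hf.2.2 p h1 h2 (h3.mul_left _)⟩, rfl⟩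
      have := hf.2.1
      rw [hP.natDegree_mul hg] at this
      omega
  · have : {f ∈ frS (insert P S) n | P ∣ f} = ∅ := by
      ext f
      simp only [Set.mem_empty_iff_false, iff_false]
      rintro ⟨hf, hd⟩
      have := natDegree_le_of_dvd hd hf.1.ne_zero
      rw [hf.2.1] at this
      exact hn this
    rw [this]; simp

lemma cS_insert [DecidableEq F[X]] (S : Finset F[X]) (P : F[X]) (hP : P.Monic) (hi : Irreducible P) (hPS : P ∉ S) :
    cS S = (1 - PowerSeries.X ^ P.natDegree) * cS (insert P S) := by
  have : cS (insert P S) = cS S + PowerSeries.X ^ P.natDegree * cS (insert P S) := by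
    ext n
    rw [map_add, PowerSeries.coeff_X_pow_mul']
    simp only [cS, PowerSeries.coeff_mk]
    rw [frS_insert S P hP hi hPS n]
    push_cast
    simp
  linear_combination -this

/-- the log derivative coefficients -/
noncomputable def aS (S : Finset F[X]) : PowerSeries ℚ :=
  PowerSeries.mk fun j => ∑ P ∈ S, if P.natDegree ∣ j ∧ j ≠ 0 then (P.natDegree : ℚ) else 0

lemma logd (S : Finset F[X]) (hS : ∀ p ∈ S, p.Monic ∧ Irreducible p) :
    PowerSeries.X * PowerSeries.derivative ℚ (cS S) = aS S * cS S := by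
  classical
  induction S using Finset.induction_on with
  | empty =>
    have : cS (∅ : Finset F[X]) = 1 := by
      ext n
      simp only [cS, PowerSeries.coeff_mk, frS_empty, PowerSeries.coeff_one]
      split_ifs <;> simp
    rw [this]
    have h2 : aS (∅ : Finset F[X]) = 0 := by ext n; simp [aS]
    rw [h2]; simp
  | insert P S hPS ih =>
    have hP := hS P (Finset.mem_insert_self _ _)
    have ih := ih (fun p hp => hS p (Finset.mem_insert_of_mem hp))
    have hc := cS_insert S P hP.1 hP.2 hPS
    set d := P.natDegree with hd
    have hd0 : 0 < d := hP.2.natDegree_pos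
    set L : PowerSeries ℚ := PowerSeries.mk fun j => if d ∣ j ∧ j ≠ 0 then (d : ℚ) else 0 with hL
    have hA : aS (insert P S) = L + aS S := by
      ext n
      simp only [aS, hL, PowerSeries.coeff_mk, map_add]
      rw [Finset.sum_insert hPS]
    have hLe : (1 - PowerSeries.X ^ d) * L = (d : PowerSeries ℚ) * PowerSeries.X ^ d := by
      ext n
      rw [sub_mul, one_mul, map_sub, PowerSeries.coeff_X_pow_mul', mul_comm, ← nsmul_eq_mul', map_nsmul,
        PowerSeries.coeff_X_pow]
      simp only [hL, PowerSeries.coeff_mk]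
      rcases lt_trichotomy n d with h | h | h
      · have h1 : ¬ (d ∣ n ∧ n ≠ 0) := by
          rintro ⟨h1, h2⟩
          exact absurd (Nat.le_of_dvd (by omega) h1) (by omega)
        rw [if_neg h1, if_neg (by omega), if_neg (by omega)]; simp
      · subst h
        simp [hd0.ne']
      · have h1 : (d ∣ n ∧ n ≠ 0) ↔ (d ∣ n - d ∧ n - d ≠ 0) := by
          rw [Nat.dvd_sub_iff_left h.le dvd_rfl]
          constructor
          · rintro ⟨a, b⟩; exact ⟨a, by omega⟩
          · rintro ⟨a, b⟩; exact ⟨a, by omega⟩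
        rw [if_pos h.le]
        simp only [h1]
        rw [if_neg (by omega : ¬ (n = d))]; simp
    have hne : (1 - PowerSeries.X ^ d : PowerSeries ℚ) ≠ 0 := by
      intro h
      have := congrArg (PowerSeries.coeff 0) h
      simp [hd0.ne'] at this
    rw [hA]
    apply mul_left_cancel₀ hne
    rw [hc] at ih
    set Cc := cS (insert P S)
    have hder : PowerSeries.X * PowerSeries.derivative ℚ ((1 - PowerSeries.X ^ d) * Cc)
        = (1 - PowerSeries.X ^ d) * (PowerSeries.X * PowerSeries.derivative ℚ Cc)
          - (d : PowerSeries ℚ) * PowerSeries.X ^ d * Cc := by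
      obtain ⟨e, he⟩ : ∃ e, d = e + 1 := ⟨d - 1, by omega⟩
      rw [he, Derivation.leibniz, map_sub, Derivation.leibniz_pow, PowerSeries.derivative_X]
      simp
      ring
    rw [hder] at ih
    linear_combination ih - Cc * hLe

end PolyPart


section PolyPart2
open Polynomial
variable {F : Type} [Field F] [Fintype F]

noncomputable def aQ (F : Type) [Field F] [Fintype F] (m j : ℕ) : ℝ :=
  (∑ P ∈ Irr F m, if P.natDegree ∣ j ∧ j ≠ 0 then (P.natDegree : ℝ) else 0) / (Fintype.card F : ℝ) ^ j

lemma card_gt_one : (2:ℝ) ≤ (Fintype.card F : ℝ) := by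
  have := Fintype.one_lt_card (α := F)
  exact_mod_cast this

lemma aQ_nonneg (m j : ℕ) : 0 ≤ aQ F m j := by
  unfold aQ
  refine div_nonneg (Finset.sum_nonneg fun P _ => ?_) (by positivity)
  split_ifs <;> positivity

lemma aQ_zero (m : ℕ) : aQ F m 0 = 0 := by
  simp [aQ]

lemma polyProb_eq (m n : ℕ) :
    polyProb F n m = ((frS (Irr F m) n).ncard : ℝ) / (Fintype.card F : ℝ) ^ n := by
  unfold polyProb
  congr 2
  rw [← Nat.card_coe_set_eq]
  apply Nat.card_congr
  apply Equiv.subtypeEquivRight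
  intro f
  simp only [frS, Set.mem_ofPred_eq]
  refine and_congr_right fun _ => and_congr_right fun _ => ?_
  refine forall_congr' fun p => forall_congr' fun h1 => forall_congr' fun h2 => forall_congr' fun _ => ?_
  rw [mem_Irr]
  tauto

lemma polyProb_rec (m n : ℕ) :
    ((n:ℝ)+1) * polyProb F (n+1) m =
      ∑ k ∈ Finset.range (n+1), aQ F m (k+1) * polyProb F (n-k) m := by
  have h := congrArg (PowerSeries.coeff (n+1)) (logd (Irr F m) (fun p hp => ⟨(mem_Irr.1 hp).1, (mem_Irr.1 hp).2.1⟩))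
  rw [PowerSeries.coeff_succ_X_mul, PowerSeries.coeff_derivative, PowerSeries.coeff_mul,
    Finset.Nat.sum_antidiagonal_eq_sum_range_succ_mk, Finset.sum_range_succ'] at h
  simp only [cS, aS, PowerSeries.coeff_mk] at h
  have h' := congrArg (fun t : ℚ => (t : ℝ)) h
  push_cast at h'
  simp only [polyProb_eq, aQ]
  have hq : (Fintype.card F : ℝ) ≠ 0 := by have := card_gt_one (F := F); positivity
  have e1 : ∀ k ∈ Finset.range (n+1), (∑ P ∈ Irr F m, if P.natDegree ∣ k+1 ∧ k+1 ≠ 0 then (P.natDegree : ℝ) else 0) / (Fintype.card F : ℝ) ^ (k+1) * (((frS (Irr F m) (n-k)).ncard : ℝ) / (Fintype.card F : ℝ) ^ (n-k))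
     = (∑ P ∈ Irr F m, if P.natDegree ∣ k+1 ∧ k+1 ≠ 0 then (P.natDegree : ℝ) else 0) * ((frS (Irr F m) (n+1-(k+1))).ncard : ℝ) / (Fintype.card F : ℝ)^(n+1) := by
    intro k hk
    have hk' : n + 1 = (k+1) + (n-k) := by have := Finset.mem_range.1 hk; omega
    rw [div_mul_div_comm, ← pow_add, ← hk']
    rw [Nat.add_sub_add_right]
  rw [Finset.sum_congr rfl e1, ← Finset.sum_div, mul_div_assoc', mul_comm]
  congr 1
  rw [h']
  simp
  refine Finset.sum_congr rfl fun x _ => ?_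
  congr 1
  exact Finset.sum_congr rfl fun P _ => by split_ifs <;> simp

lemma polyProb_full (m n : ℕ) (h : n ≤ m) : polyProb F n m = 1 := by
  rw [polyProb_eq]
  have : frS (Irr F m) n = {p : F[X] | p.Monic ∧ p.natDegree = n} := by
    ext f
    simp only [frS, Set.mem_ofPred_eq]
    constructor
    · rintro ⟨a, b, _⟩; exact ⟨a, b⟩
    · rintro ⟨a, b⟩
      refine ⟨a, b, fun p h1 h2 h3 => mem_Irr.2 ⟨h1, h2, ?_⟩⟩
      have := natDegree_le_of_dvd h3 a.ne_zero
      omega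
  rw [this, ← Nat.card_coe_set_eq]
  have h2 := card_monic_deg (F := F) n
  have hq : (Fintype.card F : ℝ) ≠ 0 := by have := card_gt_one (F := F); positivity
  rw [show Nat.card ↑{p : F[X] | p.Monic ∧ p.natDegree = n} = Fintype.card F ^ n from h2]
  push_cast
  exact div_self (pow_ne_zero _ hq)

lemma polyProb_pos (m n : ℕ) (hm : 1 ≤ m) : 0 < polyProb F n m := by
  rw [polyProb_eq]
  have hq : (0:ℝ) < (Fintype.card F : ℝ) := by have := card_gt_one (F := F); positivity
  refine div_pos ?_ (by positivity)
  have : 0 < (frS (Irr F m) n).ncard := by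
    rw [Set.ncard_pos (frS_finite _ _)]
    refine ⟨X ^ n, monic_X_pow n, natDegree_X_pow n, fun p h1 h2 h3 => mem_Irr.2 ⟨h1, h2, ?_⟩⟩
    have := natDegree_le_of_dvd (h2.prime.dvd_of_dvd_pow h3) X_ne_zero
    simp at this
    omega
  exact_mod_cast this

lemma aQ_one (m j : ℕ) (hj : 1 ≤ j) (hm : j ≤ m) : aQ F m j = 1 := by
  induction j using Nat.strong_induction_on with
  | _ j ih =>
    obtain ⟨n, rfl⟩ : ∃ n, j = n + 1 := ⟨j-1, by omega⟩
    have h := polyProb_rec (F := F) m n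
    rw [Finset.sum_range_succ, polyProb_full m (n+1) hm, Nat.sub_self, polyProb_full m 0 (by omega)] at h
    rw [Finset.sum_congr rfl (g := fun _ => (1:ℝ))] at h
    · simp at h; linarith
    · intro k hk
      have := Finset.mem_range.1 hk
      rw [ih (k+1) (by omega) (by omega) (by omega), polyProb_full m (n-k) (by omega)]; norm_num

/-- number of irreducibles of degree d, times d, at most q^d -/
lemma irr_deg_le (m d : ℕ) (hd : 1 ≤ d) (hm : d ≤ m) :
    ∑ P ∈ Irr F m with P.natDegree = d, (P.natDegree : ℝ) ≤ (Fintype.card F : ℝ)^d := by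
  have h := aQ_one (F := F) m d hd hm
  have hq : (0:ℝ) < (Fintype.card F : ℝ) := by have := card_gt_one (F := F); positivity
  unfold aQ at h
  rw [div_eq_one_iff_eq (by positivity)] at h
  rw [← h, Finset.sum_filter]
  refine Finset.sum_le_sum fun P _ => ?_
  split_ifs with h1 h2 h2
  · exact le_rfl
  · exact absurd ⟨h1 ▸ dvd_rfl, by omega⟩ h2
  · positivity
  · exact le_rfl

lemma geom_sum_le (x : ℝ) (hx : 2 ≤ x) (k : ℕ) : ∑ d ∈ Finset.Icc 1 k, x^d ≤ 2 * x^k := by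
  have : ∑ d ∈ Finset.Icc 1 k, x^d ≤ 2 * x^k - 1 := by
    induction k with
    | zero => norm_num
    | succ k ih =>
      rw [Finset.sum_Icc_succ_top (by omega)]
      have : 2 * x^k ≤ x^(k+1) := by rw [pow_succ]; nlinarith [pow_pos (by linarith : (0:ℝ) < x) k]
      linarith
  linarith

lemma aQ_sum_le (m j k : ℕ) (hkm : k ≤ m) (h : ∀ d, d ∣ j → d ≤ m → j ≠ 0 → d ≤ k) :
    aQ F m j ≤ 2 * (Fintype.card F : ℝ)^k / (Fintype.card F : ℝ)^j := by
  have hq2 := card_gt_one (F := F)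
  unfold aQ
  gcongr
  refine le_trans ?_ (geom_sum_le _ hq2 k)
  calc _ ≤ ∑ d ∈ Finset.Icc 1 k, ∑ P ∈ Irr F m with P.natDegree = d, (P.natDegree : ℝ) := by
        simp_rw [Finset.sum_filter]
        rw [Finset.sum_comm]
        refine Finset.sum_le_sum fun P hP => ?_
        split_ifs with h1
        · have hP' := mem_Irr.1 hP
          rw [Finset.sum_ite_eq]
          rw [if_pos (Finset.mem_Icc.2 ⟨hP'.2.1.natDegree_pos, h _ h1.1 hP'.2.2 h1.2⟩)]
        · refine Finset.sum_nonneg fun d _ => ?_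
          split_ifs <;> positivity
    _ ≤ _ := Finset.sum_le_sum fun d hd => by
        have := Finset.mem_Icc.1 hd
        exact irr_deg_le m d this.1 (by omega)

lemma aQ_le_a (m j : ℕ) : aQ F m j ≤ 2 * (Fintype.card F : ℝ)^m / (Fintype.card F : ℝ)^j :=
  aQ_sum_le m j m le_rfl (fun _ _ h _ => h)

lemma aQ_le_b (m j : ℕ) (hj : m < j) (hj2 : j ≤ 2 * m) : aQ F m j ≤ 2 * (Fintype.card F : ℝ)^(j/2) / (Fintype.card F : ℝ)^j := by
  refine aQ_sum_le m j (j/2) (by omega) ?_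
  rintro d ⟨e, rfl⟩ h h0
  have he : 2 ≤ e := by
    rcases e with _ | _ | e
    · simp at h0
    · omega
    · omega
  rw [Nat.le_div_iff_mul_le (by norm_num)]
  exact Nat.mul_le_mul_left _ he

lemma aQ_two (m : ℕ) (hm : 1 ≤ m) : 1 / (Fintype.card F : ℝ)^m ≤ aQ F m (2*m) := by
  have hq : (0:ℝ) < (Fintype.card F : ℝ) := by have := card_gt_one (F := F); positivity
  have h := aQ_one (F := F) m m hm le_rfl
  unfold aQ at h ⊢
  rw [div_eq_one_iff_eq (by positivity)] at h
  rw [div_le_div_iff₀ (by positivity) (by positivity), one_mul, two_mul, pow_add]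
  gcongr
  rw [← h]
  refine Finset.sum_le_sum fun P _ => ?_
  split_ifs with h1 h2 h2
  · exact le_rfl
  · exact absurd ⟨h1.1.trans ⟨2, by ring⟩, by omega⟩ h2
  · positivity
  · exact le_rfl

/-- Euler factor facts -/
lemma hasSum_factor (d : ℕ) (hd : 1 ≤ d) (y : ℝ) (hy : |y| < 1) :
    HasSum (fun j : ℕ => (if d ∣ j ∧ j ≠ 0 then (d:ℝ) else 0) * y^j) (d * y^d / (1 - y^d)) := by
  have hyd : |y^d| < 1 := by
    rw [abs_pow]; exact pow_lt_one₀ (abs_nonneg _) hy (by omega)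
  have h1 : HasSum (fun k : ℕ => (d:ℝ) * y^d * (y^d)^k) (d * y^d / (1 - y^d)) := by
    rw [div_eq_mul_inv]
    exact (hasSum_geometric_of_abs_lt_one hyd).mul_left _
  have hinj : Function.Injective (fun k : ℕ => d * (k+1)) := by
    intro a b h
    have := Nat.eq_of_mul_eq_mul_left (by omega) h
    omega
  rw [← hinj.hasSum_iff]
  · convert h1 using 2 with k
    simp only [Function.comp]
    rw [if_pos ⟨dvd_mul_right _ _, by positivity⟩, mul_assoc, ← pow_mul, ← pow_add]
    congr 2; ring
  · intro j hj
    rw [if_neg, zero_mul]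
    rintro ⟨⟨k, rfl⟩, h0⟩
    apply hj
    have : k ≠ 0 := by rintro rfl; simp at h0
    exact ⟨k-1, by simp only; congr 1; omega⟩

lemma hasSum_log_factor (d : ℕ) (hd : 1 ≤ d) (y : ℝ) (hy : |y| < 1) :
    HasSum (fun j : ℕ => (if d ∣ j ∧ j ≠ 0 then (d:ℝ) else 0) * y^j / j) (-Real.log (1 - y^d)) := by
  have hyd : |y^d| < 1 := by
    rw [abs_pow]; exact pow_lt_one₀ (abs_nonneg _) hy (by omega)
  have h1 := Real.hasSum_pow_div_log_of_abs_lt_one hyd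
  have hinj : Function.Injective (fun k : ℕ => d * (k+1)) := by
    intro a b h
    have := Nat.eq_of_mul_eq_mul_left (by omega) h
    omega
  rw [← hinj.hasSum_iff]
  · convert h1 using 2 with k
    simp only [Function.comp]
    rw [if_pos ⟨dvd_mul_right _ _, by positivity⟩, ← pow_mul]
    have : (d:ℝ) ≠ 0 := by positivity
    push_cast
    rw [mul_div_mul_left _ _ this]
  · intro j hj
    rw [if_neg]
    · simp
    rintro ⟨⟨k, rfl⟩, h0⟩
    apply hj
    have : k ≠ 0 := by rintro rfl; simp at h0
    exact ⟨k-1, by simp only; congr 1; omega⟩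

lemma FqFun_eq (m : ℕ) (z : ℝ) :
    FqFun F m z = ∏ P ∈ Irr F m, (1 - (z / (Fintype.card F : ℝ)) ^ P.natDegree)⁻¹ := by
  unfold FqFun Irr
  rw [finprod_mem_eq_finite_toFinset_prod _ (irr_finite m)]

lemma FqFun_exp (m : ℕ) (z : ℝ) (hz : 0 < z) (hzq : z < (Fintype.card F : ℝ)) :
    FqFun F m z = Real.exp (∑' j : ℕ, aQ F m j * z^j / j) := by
  have hq : (0:ℝ) < (Fintype.card F : ℝ) := by linarith
  have hy0 : 0 ≤ z / (Fintype.card F : ℝ) := by positivity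
  have hy1 : z / (Fintype.card F : ℝ) < 1 := (div_lt_one hq).2 hzq
  have hy : |z / (Fintype.card F : ℝ)| < 1 := by rwa [abs_of_nonneg hy0]
  have h : HasSum (fun j : ℕ => aQ F m j * z^j / j)
      (∑ P ∈ Irr F m, -Real.log (1 - (z / (Fintype.card F : ℝ)) ^ P.natDegree)) := by
    have := hasSum_sum (s := Irr F m) (fun P hP => hasSum_log_factor P.natDegree (mem_Irr.1 hP).2.1.natDegree_pos _ hy)
    convert this using 2 with j
    rw [aQ, ← Finset.sum_div, ← Finset.sum_mul, div_pow]
    ring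
  rw [h.tsum_eq, FqFun_eq, Real.exp_sum]
  refine Finset.prod_congr rfl fun P hP => ?_
  have : (z / (Fintype.card F : ℝ)) ^ P.natDegree < 1 := pow_lt_one₀ hy0 hy1 (mem_Irr.1 hP).2.1.natDegree_pos.ne'
  rw [Real.exp_neg, Real.exp_log (by linarith)]

lemma aQ_hasSum (m : ℕ) (z : ℝ) (hz : 0 < z) (hzq : z < (Fintype.card F : ℝ)) (n : ℝ)
    (h : z * deriv (FqFun F m) z / FqFun F m z = n) :
    HasSum (fun j : ℕ => aQ F m j * z^j) n := by
  have hq : (0:ℝ) < (Fintype.card F : ℝ) := by linarith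
  set q := (Fintype.card F : ℝ)
  have hy0 : 0 ≤ z / q := by positivity
  have hy1 : z / q < 1 := (div_lt_one hq).2 hzq
  have hy : |z / q| < 1 := by rwa [abs_of_nonneg hy0]
  have hlt : ∀ P ∈ Irr F m, (z / q) ^ P.natDegree < 1 := fun P hP => pow_lt_one₀ hy0 hy1 (mem_Irr.1 hP).2.1.natDegree_pos.ne'
  have h1 : HasSum (fun j : ℕ => aQ F m j * z^j)
      (∑ P ∈ Irr F m, P.natDegree * (z / q) ^ P.natDegree / (1 - (z / q) ^ P.natDegree)) := by
    have := hasSum_sum (s := Irr F m) (fun P hP => hasSum_factor P.natDegree (mem_Irr.1 hP).2.1.natDegree_pos _ hy)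
    convert this using 2 with j
    rw [aQ, ← Finset.sum_mul, div_pow]
    ring
  convert h1
  rw [← h]
  have hF : FqFun F m = fun z => ∏ P ∈ Irr F m, (1 - (z / q) ^ P.natDegree)⁻¹ := funext (FqFun_eq m)
  have hd : ∀ P ∈ Irr F m, HasDerivAt (fun z : ℝ => (1 - (z / q) ^ P.natDegree)⁻¹)
      ((P.natDegree * (z/q)^(P.natDegree - 1) * (1/q)) / (1 - (z / q) ^ P.natDegree)^2) z := by
    intro P hP
    have e1 : HasDerivAt (fun z : ℝ => z / q) (1/q) z := (hasDerivAt_id z).div_const q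
    have e2 := ((e1.pow P.natDegree).const_sub 1).inv (by have := hlt P hP; simp; linarith)
    rw [neg_neg] at e2
    exact e2
  have hl := logDeriv_prod (𝕜 := ℝ) (s := Irr F m) (f := fun (P : F[X]) (z : ℝ) => (1 - (z / q) ^ P.natDegree)⁻¹) (x := z)
    (fun P hP => by have := hlt P hP; exact inv_ne_zero (by linarith))
    (fun P hP => (hd P hP).differentiableAt)
  rw [mul_div_assoc]
  change z * logDeriv (FqFun F m) z = _
  rw [hF]
  rw [show (fun z : ℝ => ∏ P ∈ Irr F m, (1 - (z / q) ^ P.natDegree)⁻¹) = (∏ P ∈ Irr F m, fun z : ℝ => (1 - (z / q) ^ P.natDegree)⁻¹) from by ext; simp] at *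
  rw [hl, Finset.mul_sum]
  refine Finset.sum_congr rfl fun P hP => ?_
  rw [logDeriv_apply, (hd P hP).deriv]
  have h2 : 1 - (z/q)^P.natDegree ≠ 0 := by have := hlt P hP; linarith
  obtain ⟨e, he⟩ : ∃ e, P.natDegree = e + 1 := ⟨P.natDegree - 1, by have := (mem_Irr.1 hP).2.1.natDegree_pos; omega⟩
  rw [he] at h2 ⊢
  simp only [Nat.add_sub_cancel]
  have hzy : z = (z/q) * q := by field_simp
  set y := z / q
  rw [hzy]
  rw [pow_succ] at h2 ⊢
  set w := y ^ e
  field_simp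
  rw [show y ^ (e+1) = y * w from pow_succ' y e]
end PolyPart2


section SaddlePart

structure Coef (Q : ℝ) (m : ℕ) (a : ℕ → ℝ) : Prop where
  nonneg : ∀ j, 0 ≤ a j
  zero : a 0 = 0
  one : ∀ j, 1 ≤ j → j ≤ m → a j = 1
  leA : ∀ j, a j ≤ 2 * Q^m / Q^j
  leB : ∀ j, m < j → j ≤ 2*m → a j ≤ 2 / (√Q)^j
  two : 1 / Q^m ≤ a (2*m)

variable {Q y r N : ℝ} {m : ℕ} {a : ℕ → ℝ}

lemma head_sum (hC : Coef Q m a) : ∑ j ∈ Finset.range (m+1), a j * y^j = ∑ j ∈ Finset.Icc 1 m, y^j := by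
  rw [Finset.range_eq_Ico, Finset.sum_eq_sum_Ico_succ_bot (by omega), hC.zero, zero_mul, zero_add]
  have : Finset.Ico (0+1) (m+1) = Finset.Icc 1 m := by ext; simp
  rw [this]
  refine Finset.sum_congr rfl fun j hj => ?_
  have := Finset.mem_Icc.1 hj
  rw [hC.one j this.1 this.2, one_mul]

lemma tail_term1 (hC : Coef Q m a) (hy : 0 < y) (hQ : 0 < Q) (hyr : y ≤ r * Q) (i : ℕ) :
    a (i + 2*m) * y^(i+2*m) ≤ 2 * (y^(2*m)/Q^m) * r^i := by
  have h := hC.leA (i+2*m)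
  have hyQ : y / Q ≤ r := by rw [div_le_iff₀ hQ]; exact hyr
  calc a (i + 2*m) * y^(i+2*m) ≤ 2 * Q^m / Q^(i+2*m) * y^(i+2*m) := by gcongr
    _ = 2 * (y^(2*m)/Q^m) * (y/Q)^i := by
        rw [pow_add, pow_add, div_pow, two_mul m, pow_add, pow_add]
        field_simp
    _ ≤ _ := by gcongr

lemma summable_j (hC : Coef Q m a) (hy : 0 < y) (hQ : 0 < Q) (hr : 0 < r) (hr1 : r < 1) (hyr : y ≤ r * Q) :
    Summable fun j : ℕ => (j:ℝ) * (a j * y^j) := by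
  rw [← summable_nat_add_iff (2*m)]
  have hs : Summable fun i : ℕ => ((i + 2*m : ℕ):ℝ) * (2 * (y^(2*m)/Q^m) * r^i) := by
    have h1 := summable_pow_mul_geometric_of_norm_lt_one (R := ℝ) 1 (r := r) (by rw [Real.norm_of_nonneg hr.le]; exact hr1)
    have h2 := summable_geometric_of_lt_one hr.le hr1
    have h3 := (h1.mul_left (2 * (y^(2*m)/Q^m))).add (h2.mul_left ((2*m:ℕ) * (2 * (y^(2*m)/Q^m))))
    refine h3.congr fun i => ?_
    push_cast; ring
  refine Summable.of_nonneg_of_le (fun i => ?_) (fun i => ?_) hs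
  · have := hC.nonneg (i+2*m); positivity
  · have := tail_term1 hC hy hQ hyr i
    gcongr

lemma tail1 (hC : Coef Q m a) (hy : 0 < y) (hQ : 0 < Q) (hr : 0 < r) (hr1 : r < 1) (hyr : y ≤ r * Q)
    (hs : HasSum (fun j : ℕ => a j * y^j) N) :
    N ≤ ∑ j ∈ Finset.range (2*m+1), a j * y^j + 2 * (y^(2*m)/Q^m) * (1-r)⁻¹ := by
  have h1 := hs.summable.sum_add_tsum_nat_add (2*m+1)
  rw [hs.tsum_eq] at h1
  rw [← h1]
  refine add_le_add le_rfl ?_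
  have e : 2 * (y^(2*m)/Q^m) * (1-r)⁻¹ = ∑' i : ℕ, 2 * (y^(2*m)/Q^m) * r^i := by
    rw [tsum_mul_left, tsum_geometric_of_lt_one hr.le hr1]
  rw [e]
  have hs2 : Summable fun i : ℕ => a (i+(2*m+1)) * y^(i+(2*m+1)) :=
    (summable_nat_add_iff (f := fun j : ℕ => a j * y^j) (2*m+1)).2 hs.summable
  refine Summable.tsum_le_tsum (fun i => ?_) hs2
    ((summable_geometric_of_lt_one hr.le hr1).mul_left _)
  have := tail_term1 hC hy hQ hyr (i+1)
  rw [show i + (2*m+1) = i + 1 + 2*m by ring]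
  refine this.trans ?_
  gcongr 2 * (y^(2*m)/Q^m) * ?_
  exact pow_le_pow_of_le_one hr.le hr1.le (by omega)

lemma crude (hC : Coef Q m a) (hy : 0 < y) (hQ : 0 < Q) (hr : 0 < r) (hr1 : r < 1) (hyr : y ≤ r * Q)
    (hs : HasSum (fun j : ℕ => a j * y^j) N) (hyn : y^m ≤ N) (hW : Q^m ≤ N^2) :
    N ≤ ∑ j ∈ Finset.Icc 1 m, y^j + (2*m + 2*(1-r)⁻¹) * (N^2/Q^m) := by
  have h := tail1 hC hy hQ hr hr1 hyr hs
  have hr' : 0 < (1-r)⁻¹ := inv_pos.2 (by linarith)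
  have hWle : y^(2*m)/Q^m ≤ N^2/Q^m := by
    gcongr; rw [mul_comm, pow_mul]; gcongr
  have hW1 : 1 ≤ N^2/Q^m := by rw [le_div_iff₀ (by positivity)]; linarith
  have h2 : ∑ j ∈ Finset.range (2*m+1), a j * y^j ≤ ∑ j ∈ Finset.Icc 1 m, y^j + 2*m*(N^2/Q^m) := by
    rw [← Finset.sum_range_add_sum_Ico _ (show m+1 ≤ 2*m+1 by omega), head_sum hC]
    gcongr
    refine (Finset.sum_le_card_nsmul _ _ (2 * (N^2/Q^m)) ?_).trans ?_
    · intro j hj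
      have hj' := Finset.mem_Ico.1 hj
      have hb := hC.leB j (by omega) (by omega)
      have hsq : 0 < √Q := Real.sqrt_pos.2 hQ
      calc a j * y^j ≤ 2 / (√Q)^j * y^j := by gcongr
        _ = 2 * (y/√Q)^j := by rw [div_pow]; ring
        _ ≤ 2 * (N^2/Q^m) := by
          gcongr
          rcases le_total (y/√Q) 1 with h1 | h1
          · exact (pow_le_one₀ (by positivity) h1).trans hW1
          · calc (y/√Q)^j ≤ (y/√Q)^(2*m) := pow_le_pow_right₀ h1 (by omega)
              _ = y^(2*m)/Q^m := by rw [div_pow, pow_mul (√Q), Real.sq_sqrt hQ.le]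
              _ ≤ _ := hWle
    · simp only [Nat.card_Ico, nsmul_eq_mul]
      rw [show 2*m+1-(m+1) = m by omega]
      exact le_of_eq (by ring)
  have h3 : 2 * (y^(2*m)/Q^m) * (1-r)⁻¹ ≤ 2 * (N^2/Q^m) * (1-r)⁻¹ := by gcongr
  linarith

/-- constant for the tail -/
noncomputable def Ctail (r : ℝ) : ℝ := 4 * ((1-r)⁻¹ + ∑' i : ℕ, ((i:ℝ)+2) * r^i)

lemma summ_c (hr : 0 < r) (hr1 : r < 1) : Summable fun i : ℕ => ((i:ℝ)+2) * r^i := by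
  have h1 := summable_pow_mul_geometric_of_norm_lt_one (R := ℝ) 1 (r := r) (by rw [Real.norm_of_nonneg hr.le]; exact hr1)
  have h2 := summable_geometric_of_lt_one hr.le hr1
  refine (h1.add (h2.mul_left 2)).congr fun i => ?_
  ring

lemma Ctail_pos (hr : 0 < r) (hr1 : r < 1) : 0 < Ctail r := by
  have : 0 < (1-r)⁻¹ := inv_pos.2 (by linarith)
  have : 0 ≤ ∑' i : ℕ, ((i:ℝ)+2) * r^i := tsum_nonneg fun i => by positivity
  unfold Ctail; positivity

lemma refined (hC : Coef Q m a) (hm : 1 ≤ m) (hy : 0 < y) (hQ : 0 < Q) (hr : 0 < r) (hr1 : r < 1) (hyr : y ≤ r * Q)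
    (hyl : √Q ≤ r * y) :
    ∑' i : ℕ, ((i+(m+1):ℕ):ℝ) * (a (i+(m+1)) * y^(i+(m+1))) ≤ m * Ctail r * (y^(2*m)/Q^m) := by
  have hsum := summable_j hC hy hQ hr hr1 hyr
  have hsum' := (summable_nat_add_iff (m+1)).2 hsum
  have hsq : 0 < √Q := Real.sqrt_pos.2 hQ
  set W := y^(2*m)/Q^m with hW
  have hW0 : 0 < W := by positivity
  rw [← hsum'.sum_add_tsum_nat_add m]
  have e1 : ∑ i ∈ Finset.range m, ((i+(m+1):ℕ):ℝ) * (a (i+(m+1)) * y^(i+(m+1))) ≤ m * (4 * W * (1-r)⁻¹) := by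
    calc _ ≤ ∑ i ∈ Finset.range m, (2*m:ℝ) * (2 * W * r^(m-1-i)) := by
          refine Finset.sum_le_sum fun i hi => ?_
          have hi' := Finset.mem_range.1 hi
          have hb := hC.leB (i+(m+1)) (by omega) (by omega)
          have hn := hC.nonneg (i+(m+1))
          have h1 : ((i+(m+1):ℕ):ℝ) ≤ 2*m := by
            have : i+(m+1) ≤ 2*m := by omega
            exact_mod_cast this
          refine mul_le_mul h1 ?_ (by positivity) (by positivity)
          calc a (i+(m+1)) * y^(i+(m+1)) ≤ 2/(√Q)^(i+(m+1)) * y^(i+(m+1)) := by gcongr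
            _ = 2 * W * (√Q/y)^(m-1-i) := by
              have hWe : W = (y/√Q)^(i+(m+1)) * (y/√Q)^(m-1-i) := by
                rw [← pow_add, show i+(m+1)+(m-1-i) = 2*m by omega, div_pow, pow_mul (√Q), Real.sq_sqrt hQ.le]
              rw [hWe, mul_assoc, mul_assoc, ← mul_pow, show y/√Q * (√Q/y) = 1 by field_simp, one_pow, div_pow]
              ring
            _ ≤ _ := by
              gcongr
              rw [div_le_iff₀ hy]; exact hyl
      _ = (2*m:ℝ) * (2*W) * ∑ i ∈ Finset.range m, r^(m-1-i) := by
          rw [Finset.mul_sum]; refine Finset.sum_congr rfl fun i _ => by ring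
      _ = (2*m:ℝ) * (2*W) * ∑ i ∈ Finset.range m, r^i := by
          rw [Finset.sum_range_reflect (fun i => r^i) m]
      _ ≤ (2*m:ℝ) * (2*W) * (1-r)⁻¹ := by
          gcongr
          rw [← tsum_geometric_of_lt_one hr.le hr1]
          exact (summable_geometric_of_lt_one hr.le hr1).sum_le_tsum _ (fun i _ => by positivity)
      _ = _ := by ring
  have e2 : ∑' i : ℕ, ((i+m+(m+1):ℕ):ℝ) * (a (i+m+(m+1)) * y^(i+m+(m+1))) ≤ m * (4 * W * ∑' i : ℕ, ((i:ℝ)+2) * r^i) := by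
    rw [← tsum_mul_left, ← tsum_mul_left]
    refine Summable.tsum_le_tsum (fun i => ?_) ((summable_nat_add_iff m).2 hsum') (((summ_c hr hr1).mul_left _).mul_left _)
    have h1 := tail_term1 hC hy hQ hyr (i+1)
    rw [show i+m+(m+1) = i+1+2*m by ring]
    have hn := hC.nonneg (i+1+2*m)
    have h2 : ((i+1+2*m:ℕ):ℝ) ≤ 2*m*(i+2) := by
      have : i+1+2*m ≤ 2*m*(i+2) := by nlinarith
      exact_mod_cast this
    calc _ ≤ (2*m*(i+2):ℝ) * (2*W*r^(i+1)) := mul_le_mul h2 h1 (by positivity) (by positivity)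
      _ ≤ (2*m*(i+2):ℝ) * (2*W*r^i) := by
          gcongr ?_ * (2*W*?_)
          exact pow_le_pow_of_le_one hr.le hr1.le (by omega)
      _ = _ := by ring
  calc _ ≤ m * (4 * W * (1-r)⁻¹) + m * (4 * W * ∑' i : ℕ, ((i:ℝ)+2) * r^i) := add_le_add e1 e2
    _ = _ := by unfold Ctail; ring

lemma refinedR (hC : Coef Q m a) (hm : 1 ≤ m) (hy : 0 < y) (hQ : 0 < Q) (hr : 0 < r) (hr1 : r < 1) (hyr : y ≤ r * Q)
    (hyl : √Q ≤ r * y) (hs : HasSum (fun j : ℕ => a j * y^j) N) :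
    N - ∑ j ∈ Finset.Icc 1 m, y^j ≤ Ctail r * (y^(2*m)/Q^m) := by
  have h := refined hC hm hy hQ hr hr1 hyr hyl
  have hsum := summable_j hC hy hQ hr hr1 hyr
  have h1 := hs.summable.sum_add_tsum_nat_add (m+1)
  rw [hs.tsum_eq, head_sum hC] at h1
  have hm0 : (0:ℝ) < m := by exact_mod_cast hm
  have h2 : m * ∑' i : ℕ, (a (i+(m+1)) * y^(i+(m+1))) ≤ ∑' i : ℕ, ((i+(m+1):ℕ):ℝ) * (a (i+(m+1)) * y^(i+(m+1))) := by
    rw [← tsum_mul_left]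
    refine Summable.tsum_le_tsum (fun i => ?_) (((summable_nat_add_iff (m+1)).2 hs.summable).mul_left _)
      ((summable_nat_add_iff (m+1)).2 hsum)
    have hn := hC.nonneg (i+(m+1))
    gcongr
    omega
  have h3 := h2.trans h
  rw [mul_assoc] at h3
  have := le_of_mul_le_mul_left h3 hm0
  linarith

lemma lowerR (hC : Coef Q m a) (hm : 1 ≤ m) (hy : 0 < y) 
    (hs : HasSum (fun j : ℕ => a j * y^j) N) :
    y^(2*m)/Q^m ≤ N - ∑ j ∈ Finset.Icc 1 m, y^j := by
  have h1 := hs.summable.sum_add_tsum_nat_add (m+1)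
  rw [hs.tsum_eq, head_sum hC] at h1
  have h2 := ((summable_nat_add_iff (m+1)).2 hs.summable).le_tsum (m-1) (fun i _ => by
    have := hC.nonneg (i+(m+1)); positivity)
  rw [show m-1+(m+1) = 2*m by omega] at h2
  have h3 := hC.two
  have : y^(2*m)/Q^m ≤ a (2*m) * y^(2*m) := by
    calc y^(2*m)/Q^m = 1/Q^m * y^(2*m) := by ring
      _ ≤ _ := by gcongr
  linarith

lemma exp_quad (u : ℝ) (hu : 0 ≤ u) : (1 - Real.exp (-u))^2/2 ≤ Real.exp (-u) - 1 + u := by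
  set v := 1 - Real.exp (-u) with hv
  have h1 : Real.exp (-u) ≤ 1 := Real.exp_le_one_iff.2 (by linarith)
  have h2 := Real.exp_pos (-u)
  have hv0 : 0 ≤ v := by linarith
  have h3 := Real.hasSum_pow_div_log_of_abs_lt_one (x := v) (by rw [abs_of_nonneg hv0]; linarith)
  have h4 := sum_le_hasSum (Finset.range 2) (fun i _ => by positivity) h3
  have h5 : Real.log (1 - v) = -u := by rw [hv, sub_sub_cancel, Real.log_exp]
  rw [h5] at h4
  norm_num [Finset.sum_range_succ] at h4
  linarith

/-- the saddle point comparison -/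
lemma saddle {x : ℝ} (hx : 0 < x) (hy : 0 < y) (hyx : y ≤ x) (hN : 0 < N) (hm : 1 ≤ m)
    (hxs : ∑ j ∈ Finset.Icc 1 m, x^j = N) (R : ℝ) (hR : R = N - ∑ j ∈ Finset.Icc 1 m, y^j) :
    R^2/(2*m*N) ≤ ∑ j ∈ Finset.Icc 1 m, y^j/j - ∑ j ∈ Finset.Icc 1 m, x^j/j + N * Real.log (x/y) ∧
    ∑ j ∈ Finset.Icc 1 m, y^j/j - ∑ j ∈ Finset.Icc 1 m, x^j/j + N * Real.log (x/y) ≤ R^2/(m*y^m) := by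
  set t := Real.log (x/y) with ht
  have ht0 : 0 ≤ t := Real.log_nonneg (by rw [le_div_iff₀ hy]; linarith)
  have hm0 : (0:ℝ) < m := by exact_mod_cast hm
  have hyj : ∀ j : ℕ, y^j = x^j * Real.exp (-(j*t)) := by
    intro j
    rw [← mul_neg, Real.exp_nat_mul, Real.exp_neg, ht, Real.exp_log (by positivity), ← mul_pow]
    congr 1; field_simp
  have hR' : R = ∑ j ∈ Finset.Icc 1 m, x^j * (1 - Real.exp (-(j*t))) := by
    rw [hR, ← hxs, ← Finset.sum_sub_distrib]
    refine Finset.sum_congr rfl fun j _ => by rw [hyj j]; ring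
  have hΔ : ∑ j ∈ Finset.Icc 1 m, y^j/j - ∑ j ∈ Finset.Icc 1 m, x^j/j + N * t
      = ∑ j ∈ Finset.Icc 1 m, x^j/j * (Real.exp (-(j*t)) - 1 + j*t) := by
    rw [← hxs, ← Finset.sum_sub_distrib, Finset.sum_mul, ← Finset.sum_add_distrib]
    refine Finset.sum_congr rfl fun j hj => ?_
    have : (0:ℝ) < j := by exact_mod_cast (Finset.mem_Icc.1 hj).1
    rw [hyj j]; field_simp
  rw [hΔ]
  have hv0 : ∀ j : ℕ, 0 ≤ 1 - Real.exp (-(j*t)) := fun j => by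
    have : Real.exp (-(j*t)) ≤ 1 := Real.exp_le_one_iff.2 (by have : 0 ≤ j*t := by positivity
                                                              linarith)
    linarith
  have hR0 : 0 ≤ R := by rw [hR']; exact Finset.sum_nonneg fun j _ => mul_nonneg (by positivity) (hv0 j)
  constructor
  · rw [div_le_iff₀ (by positivity)]
    have hcs : R^2 ≤ N * ∑ j ∈ Finset.Icc 1 m, x^j * (1 - Real.exp (-(j*t)))^2 := by
      rw [hR', ← hxs]
      apply Finset.sum_sq_le_sum_mul_sum_of_sq_le_mul
      · intro j _; positivity
      · intro j _; positivity
      · intro j _; exact le_of_eq (by ring)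
    refine hcs.trans ?_
    have : ∑ j ∈ Finset.Icc 1 m, x^j * (1 - Real.exp (-(j*t)))^2 ≤ 2*m*∑ j ∈ Finset.Icc 1 m, x^j/j * (Real.exp (-(j*t)) - 1 + j*t) := by
      rw [Finset.mul_sum]
      refine Finset.sum_le_sum fun j hj => ?_
      have hj' := Finset.mem_Icc.1 hj
      have hj0 : (0:ℝ) < j := by exact_mod_cast hj'.1
      have hjm : (j:ℝ) ≤ m := by exact_mod_cast hj'.2
      have hq := exp_quad (j*t) (by positivity)
      have hq0 : 0 ≤ Real.exp (-(j*t)) - 1 + j*t := le_trans (by positivity) hq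
      calc x^j * (1 - Real.exp (-(j*t)))^2 ≤ x^j * (2 * (Real.exp (-(j*t)) - 1 + j*t)) := by
            gcongr; linarith
        _ = 2 * j * (x^j/j * (Real.exp (-(j*t)) - 1 + j*t)) := by field_simp
        _ ≤ _ := by gcongr
    calc N * _ ≤ N * _ := mul_le_mul_of_nonneg_left this hN.le
      _ = _ := by ring
  · have h1 : ∑ j ∈ Finset.Icc 1 m, x^j/j * (Real.exp (-(j*t)) - 1 + j*t) ≤ t * R := by
      rw [hR', Finset.mul_sum]
      refine Finset.sum_le_sum fun j hj => ?_
      have hj' := Finset.mem_Icc.1 hj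
      have hj0 : (0:ℝ) < j := by exact_mod_cast hj'.1
      have h2 : Real.exp (-(j*t)) - 1 + j*t ≤ j*t*(1 - Real.exp (-(j*t))) := by
        have h3 : (j*t+1) * Real.exp (-(j*t)) ≤ 1 := by
          calc (j*t+1) * Real.exp (-(j*t)) ≤ Real.exp (j*t) * Real.exp (-(j*t)) := by
                gcongr; exact Real.add_one_le_exp _
            _ = 1 := by rw [← Real.exp_add]; simp
        linarith
      calc _ ≤ x^j/j * (j*t*(1 - Real.exp (-(j*t)))) := by gcongr
        _ = _ := by field_simp
    have h2 : m * t ≤ R / y^m := by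
      rw [le_div_iff₀ (by positivity)]
      have h3 : x^m * (1 - Real.exp (-(m*t))) ≤ R := by
        rw [hR']
        exact Finset.single_le_sum (f := fun j : ℕ => x^j * (1 - Real.exp (-(j*t)))) (fun j _ => mul_nonneg (by positivity) (hv0 j)) (Finset.mem_Icc.2 ⟨hm, le_rfl⟩)
      have h4 : x^m = y^m * Real.exp (m*t) := by
        rw [hyj m, mul_assoc, ← Real.exp_add]; simp
      have h5 := Real.add_one_le_exp (m*t)
      have h6 : x^m * Real.exp (-(m*t)) = y^m := (hyj m).symm
      have h7 : 0 < y^m := by positivity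
      nlinarith
    have h3 : t ≤ R/y^m/m := by rw [le_div_iff₀ hm0]; linarith
    refine h1.trans ?_
    calc t * R ≤ R/y^m/m * R := by gcongr
      _ = _ := by field_simp

lemma exists_x (m : ℕ) (hm : 1 ≤ m) (N : ℝ) (hN : 0 < N) : ∃ x : ℝ, 0 < x ∧ ∑ j ∈ Finset.Icc 1 m, x^j = N := by
  have hc : ContinuousOn (fun x : ℝ => ∑ j ∈ Finset.Icc 1 m, x^j) (Set.Icc 0 N) := by fun_prop
  have h0 : ∑ j ∈ Finset.Icc 1 m, (0:ℝ)^j = 0 := Finset.sum_eq_zero fun j hj => by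
    have := (Finset.mem_Icc.1 hj).1
    exact zero_pow (by omega)
  have h1 : N ≤ ∑ j ∈ Finset.Icc 1 m, N^j := by
    have := Finset.single_le_sum (f := fun j : ℕ => N^j) (s := Finset.Icc 1 m) (fun j _ => by positivity) (Finset.mem_Icc.2 ⟨le_rfl, hm⟩)
    simpa using this
  obtain ⟨x, hx, hxe⟩ := intermediate_value_Icc hN.le hc (show N ∈ _ from ⟨by simp only [h0]; exact hN.le, h1⟩)
  refine ⟨x, lt_of_le_of_ne hx.1 ?_, hxe⟩
  rintro rfl
  simp only [h0] at hxe
  exact hN.ne hxe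

lemma y_le_x (hC : Coef Q m a) (hm : 1 ≤ m) (hy : 0 < y) (hs : HasSum (fun j : ℕ => a j * y^j) N) {x : ℝ} (hx : 0 < x)
    (hxs : ∑ j ∈ Finset.Icc 1 m, x^j = N) : y ≤ x := by
  by_contra h
  push Not at h
  have h1 : ∑ j ∈ Finset.Icc 1 m, y^j ≤ N := by
    rw [← head_sum hC]
    exact sum_le_hasSum _ (fun j _ => by have := hC.nonneg j; positivity) hs
  have h2 : ∑ j ∈ Finset.Icc 1 m, x^j < ∑ j ∈ Finset.Icc 1 m, y^j := by
    refine Finset.sum_lt_sum_of_nonempty ⟨1, Finset.mem_Icc.2 ⟨le_rfl, hm⟩⟩ fun j hj => ?_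
    have := (Finset.mem_Icc.1 hj).1
    exact pow_lt_pow_left₀ h hx.le (by omega)
  linarith

end SaddlePart


section CombPart

variable {Q y r N : ℝ} {m : ℕ} {a : ℕ → ℝ}

lemma geo_y (hy : 0 < y) (hr1 : r < 1) (hry : 1 ≤ r * y) (m : ℕ) :
    (1 - r) * ∑ j ∈ Finset.Icc 1 m, y^j ≤ y^m := by
  induction m with
  | zero => simp
  | succ k ih =>
    rw [Finset.sum_Icc_succ_top (by omega), mul_add]
    have : y^k ≤ r * y^(k+1) := by
      rw [pow_succ]
      have := pow_pos hy k
      nlinarith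
    linarith

lemma y_bounds (ε : ℝ) (hε : 0 < ε) (hε2 : ε < 1/2) (hQ : 2 ≤ Q) (n : ℕ) (hn : 2 ≤ n) (hm : 1 ≤ m)
    (hml : (1 + ε) * Real.log n / Real.log Q ≤ m)
    (hmu : m ≤ (2 - ε) * Real.log n / Real.log Q)
    (hC : Coef Q m a) (hy : 0 < y) (hs : HasSum (fun j : ℕ => a j * y^j) n)
    (hr : r = Real.exp (-(Real.log Q * ε / 8)))
    (c1 : (2*m + 2*(1-r)⁻¹) * ((n:ℝ)^2/Q^m) ≤ n/2) (c2 : 2*(m:ℝ) < n)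
    (c3 : Real.log (2*m) ≤ ε/4 * Real.log n) :
    y ≤ r * Q ∧ √Q ≤ r * y ∧ (1-r)/2 * n ≤ y^m ∧ y^m ≤ n := by
  have hQ0 : 0 < Q := by linarith
  have hL : 0 < Real.log Q := Real.log_pos (by linarith)
  have hn0 : (0:ℝ) < n := by positivity
  have hm0 : (0:ℝ) < m := by exact_mod_cast hm
  have hl : 0 < Real.log n := Real.log_pos (by exact_mod_cast hn)
  set L := Real.log Q with hLdef
  set l := Real.log n with hldef
  rw [div_le_iff₀ hL] at hml
  rw [le_div_iff₀ hL] at hmu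
  have hym : y^m ≤ n := by
    have := le_hasSum hs m (fun j _ => by have := hC.nonneg j; positivity)
    rwa [hC.one m hm le_rfl, one_mul] at this
  have hQe : Q = Real.exp L := (Real.exp_log hQ0).symm
  have hlogy : m * Real.log y ≤ l := by
    rw [← Real.log_pow]
    exact Real.log_le_log (by positivity) hym
  have hyr : y ≤ r * Q := by
    rw [hr, hQe, ← Real.exp_add]
    rw [← Real.log_le_iff_le_exp hy]
    have h1 : (1+ε) * (m * Real.log y) ≤ m * L := by nlinarith
    have h2 : (1+ε) * Real.log y ≤ L := by
      have : m * ((1+ε) * Real.log y) ≤ m * L := by linarith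
      exact le_of_mul_le_mul_left this hm0
    have h3 : L ≤ (1+ε) * (-(L*ε/8) + L) := by nlinarith [mul_pos hL hε]
    have h4 : (1+ε) * Real.log y ≤ (1+ε) * (-(L*ε/8) + L) := by linarith
    exact le_of_mul_le_mul_left h4 (by linarith)
  have hr0 : 0 < r := by rw [hr]; exact Real.exp_pos _
  have hr1 : r < 1 := by
    rw [hr, Real.exp_lt_one_iff]
    have : 0 < L * ε / 8 := by positivity
    linarith
  have hQm : Q^m ≤ (n:ℝ)^2 := by
    rw [← Real.log_le_log_iff (by positivity) (by positivity), Real.log_pow, Real.log_pow]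
    push_cast
    nlinarith
  have hcr := crude hC hy hQ0 hr0 hr1 hyr hs hym hQm
  have hsum : (n:ℝ)/2 ≤ ∑ j ∈ Finset.Icc 1 m, y^j := by linarith
  have hy1 : 1 ≤ y := by
    by_contra h
    push Not at h
    have : ∑ j ∈ Finset.Icc 1 m, y^j ≤ ∑ j ∈ Finset.Icc 1 m, 1 := by
      refine Finset.sum_le_sum fun j _ => pow_le_one₀ hy.le h.le
    simp at this
    linarith
  have hsum2 : ∑ j ∈ Finset.Icc 1 m, y^j ≤ m * y^m := by
    have := Finset.sum_le_card_nsmul (Finset.Icc 1 m) (fun j : ℕ => y^j) (y^m) (fun j hj =>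
      pow_le_pow_right₀ hy1 (Finset.mem_Icc.1 hj).2)
    simpa using this
  have hlow : l - Real.log (2*m) ≤ m * Real.log y := by
    rw [← Real.log_pow, hldef, ← Real.log_div (by positivity) (by positivity)]
    apply Real.log_le_log (by positivity)
    rw [div_le_iff₀ (by positivity)]
    linarith
  have hyl : √Q ≤ r * y := by
    have hsq : √Q = Real.exp (L/2) := by
      rw [hQe, ← Real.exp_half]
    rw [hsq, hr]
    nth_rewrite 1 [← Real.exp_log hy]
    rw [← Real.exp_add, Real.exp_le_exp]
    have h1 : m * ((2-ε) * Real.log y) ≥ m * ((1-ε/4) * L) := by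
      have : (1-ε/4) * l ≤ m * Real.log y := by linarith
      have h5 : (1-ε/4) * (m*L) ≤ (1-ε/4) * ((2-ε)*l) := by
        apply mul_le_mul_of_nonneg_left hmu; linarith
      have h6 : (2-ε)*((1-ε/4) * l) ≤ (2-ε) * (m * Real.log y) := by
        apply mul_le_mul_of_nonneg_left this; linarith
      linarith
    have h2 := le_of_mul_le_mul_left h1 hm0
    have h3 : (2-ε) * (L/2 + L*ε/8) ≤ (1-ε/4)*L := by nlinarith [mul_pos hL hε, mul_pos hL (mul_pos hε hε)]
    have h4 : L/2 + L*ε/8 ≤ Real.log y := le_of_mul_le_mul_left (h3.trans h2) (by linarith)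
    linarith
  refine ⟨hyr, hyl, ?_, hym⟩
  have hry : 1 ≤ r * y := le_trans (by rw [Real.one_le_sqrt]; linarith) hyl
  have := geo_y hy hr1 hry m
  nlinarith

def a0 (m j : ℕ) : ℝ := if 1 ≤ j ∧ j ≤ m then 1 else 0

lemma a0_nonneg (m j : ℕ) : 0 ≤ a0 m j := by unfold a0; split_ifs <;> norm_num

lemma a0_hasSum (m : ℕ) (x : ℝ) (g : ℕ → ℝ) :
    HasSum (fun j => g j * (a0 m j * x^j)) (∑ j ∈ Finset.Icc 1 m, g j * x^j) := by
  have h : ∑ j ∈ Finset.Icc 1 m, g j * x^j = ∑ j ∈ Finset.Icc 1 m, g j * (a0 m j * x^j) := by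
    refine Finset.sum_congr rfl fun j hj => ?_
    rw [a0, if_pos (Finset.mem_Icc.1 hj), one_mul]
  rw [h]
  apply hasSum_sum_of_ne_finset_zero
  intro j hj
  rw [a0, if_neg (fun h => hj (Finset.mem_Icc.2 h))]; simp

lemma integrals_close (hC : Coef Q m a) (hQ : 2 ≤ Q) (hm : 2 ≤ m) (hr : 0 < r) (hr1 : r < 1) (hN : 0 < N) {x : ℝ} (hx : 0 < x) (hy : 0 < y)
    (hyQ : y ≤ r * Q) (hyl : √Q ≤ r * y) (hlow : (1-r)/2 * N ≤ y^m) (hym : y^m ≤ N)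
    (hs : HasSum (fun j : ℕ => a j * y^j) N) (hxs : ∑ j ∈ Finset.Icc 1 m, x^j = N)
    (T η : ℝ) (hT : 0 < T) (hTpi : T ≤ π) (hTV : 1 ≤ T^2 * (m*N)) (hTM : T^3 * (m^2*N) ≤ 1)
    (hTD : 2*T^2*(2*m*Ctail r*(N^2/Q^m)) ≤ η) (hη : η ≤ 1/4)
    (htail : 2*π*Real.exp (-(((1-r)/(2*Q)*N)/m*(T^2/π^2))) ≤ η * (√(m*N))⁻¹) :
    ‖(∫ θ in (-π)..π, Complex.exp (phi (fun j => a j * y^j) θ)) - ∫ θ in (-π)..π, Complex.exp (phi (fun j => a0 m j * x^j) θ)‖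
      ≤ 16*η*‖∫ θ in (-π)..π, Complex.exp (phi (fun j => a0 m j * x^j) θ)‖ := by
  have hQ0 : 0 < Q := by linarith
  have hm1 : 1 ≤ m := by omega
  have hm0 : (0:ℝ) < m := by exact_mod_cast hm1
  have hyx : y ≤ x := y_le_x hC hm1 hy hs hx hxs
  have hb : ∀ j, 0 ≤ a0 m j * x^j := fun j => mul_nonneg (a0_nonneg m j) (by positivity)
  have hb' : ∀ j, 0 ≤ a j * y^j := fun j => mul_nonneg (hC.nonneg j) (by positivity)
  have hW : y^(2*m)/Q^m ≤ N^2/Q^m := by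
    gcongr; rw [mul_comm, pow_mul]; gcongr
  have hCt := Ctail_pos hr hr1
  have hsy := summable_j hC hy hQ0 hr hr1 hyQ
  have hSn := refined hC hm1 hy hQ0 hr hr1 hyQ hyl
  have hR := refinedR hC hm1 hy hQ0 hr hr1 hyQ hyl hs
  have hx1 := a0_hasSum m x (fun j => (j:ℝ))
  have hx2 := a0_hasSum m x (fun j => (j:ℝ)^2)
  have htl : ∀ i : ℕ, |a (i+(m+1)) * y^(i+(m+1)) - a0 m (i+(m+1)) * x^(i+(m+1))| = a (i+(m+1)) * y^(i+(m+1)) := by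
    intro i
    rw [a0, if_neg (by omega), zero_mul, sub_zero, abs_of_nonneg (hb' _)]
  have hd : Summable fun j : ℕ => (j:ℝ) * |a j * y^j - a0 m j * x^j| := by
    rw [← summable_nat_add_iff (m+1)]
    have := (summable_nat_add_iff (f := fun j : ℕ => (j:ℝ) * (a j * y^j)) (m+1)).2 hsy
    refine this.congr fun i => ?_
    rw [htl]
  have hDb : ∑' j : ℕ, (j:ℝ) * |a j * y^j - a0 m j * x^j| ≤ 2*m*Ctail r*(N^2/Q^m) := by
    rw [← hd.sum_add_tsum_nat_add (m+1)]
    have e1 : ∑' i : ℕ, ((i+(m+1):ℕ):ℝ) * |a (i+(m+1)) * y^(i+(m+1)) - a0 m (i+(m+1)) * x^(i+(m+1))| ≤ m*Ctail r*(N^2/Q^m) := by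
      simp_rw [htl]
      exact hSn.trans (by gcongr)
    have e2 : ∑ j ∈ Finset.range (m+1), (j:ℝ) * |a j * y^j - a0 m j * x^j| ≤ m*Ctail r*(N^2/Q^m) := by
      have e3 : ∀ j ∈ Finset.range (m+1), (j:ℝ) * |a j * y^j - a0 m j * x^j| ≤ m * (a0 m j * x^j - a j * y^j) := by
        intro j hj
        have hj' := Finset.mem_range.1 hj
        rcases Nat.eq_zero_or_pos j with rfl | h0
        · simp [a0, hC.zero]
        · rw [hC.one j h0 (by omega), a0, if_pos ⟨h0, by omega⟩, one_mul, one_mul]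
          have : y^j ≤ x^j := by gcongr
          rw [abs_sub_comm, abs_of_nonneg (by linarith)]
          gcongr
          omega
      refine (Finset.sum_le_sum e3).trans ?_
      rw [← Finset.mul_sum, Finset.sum_sub_distrib, head_sum hC]
      have e4 : ∑ j ∈ Finset.range (m+1), a0 m j * x^j = N := by
        rw [← hxs, Finset.range_eq_Ico, Finset.sum_eq_sum_Ico_succ_bot (by omega)]
        have : Finset.Ico (0+1) (m+1) = Finset.Icc 1 m := by ext; simp
        rw [this]
        rw [a0, if_neg (by omega), zero_mul, zero_add]
        refine Finset.sum_congr rfl fun j hj => ?_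
        rw [a0, if_pos (Finset.mem_Icc.1 hj), one_mul]
      rw [e4, mul_assoc]
      gcongr
      exact hR.trans (by gcongr)
    calc _ ≤ m*Ctail r*(N^2/Q^m) + m*Ctail r*(N^2/Q^m) := add_le_add e2 e1
      _ = _ := by ring
  have hxle : ∀ (g : ℕ → ℝ) (B : ℝ), (∀ j ∈ Finset.Icc 1 m, g j ≤ B) → ∑ j ∈ Finset.Icc 1 m, g j * x^j ≤ B * N := by
    intro g B h
    rw [← hxs, Finset.mul_sum]
    refine Finset.sum_le_sum fun j hj => ?_
    gcongr
    exact h j hj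
  have hK0 : (0:ℝ) ≤ (1-r)/(2*Q)*N := by
    have : 0 ≤ 1 - r := by linarith
    positivity
  have hKy1 : (1-r)/(2*Q)*N ≤ y^(m-1) := by
    have h1 : y^m = y^(m-1) * y := by rw [← pow_succ]; congr 1; omega
    have h2 : (1-r)/2*N ≤ y^(m-1) * Q := by
      refine hlow.trans ?_
      rw [h1]; gcongr
      nlinarith
    calc (1-r)/(2*Q)*N = (1-r)/2*N/Q := by field_simp
      _ ≤ _ := by rw [div_le_iff₀ hQ0]; exact h2
  have hKy : (1-r)/(2*Q)*N ≤ y^m := by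
    refine le_trans ?_ hlow
    gcongr
    linarith
  refine ratio_integrals hb hb' ?_ ?_ hd hx2.summable (m*N) (m^2*N) _ ((1-r)/(2*Q)*N) T η (by positivity) ?_ ?_ hDb m hm hK0 ?_ ?_ ?_ ?_ hT hTpi hTV hTM hTD hη htail
  · refine hx1.summable.congr fun j => ?_
    rw [abs_of_nonneg (hb j)]
  · refine hsy.congr fun j => ?_
    rw [abs_of_nonneg (hb' j)]
  · rw [tsum_congr (fun j => by rw [abs_of_nonneg (hb j)]), hx1.tsum_eq]
    exact hxle _ _ fun j hj => by exact_mod_cast (Finset.mem_Icc.1 hj).2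
  · rw [hx2.tsum_eq]
    refine hxle _ _ fun j hj => ?_
    have : (j:ℝ) ≤ m := by exact_mod_cast (Finset.mem_Icc.1 hj).2
    gcongr
  · rw [a0, if_pos ⟨hm1, le_rfl⟩, one_mul]; exact hKy.trans (by gcongr)
  · rw [a0, if_pos ⟨by omega, by omega⟩, one_mul]; exact hKy1.trans (by gcongr)
  · rw [hC.one m hm1 le_rfl, one_mul]; exact hKy
  · rw [hC.one (m-1) (by omega) (by omega), one_mul]; exact hKy1

end CombPart


section FinalPart

lemma ev_params (ε : ℝ) (hε : 0 < ε) (hε2 : ε < 1/2) (A B L Ct κ η : ℝ) (hκ : 0 < κ) (hη : 0 < η) :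
    ∀ᶠ X : ℝ in Filter.atTop, 2 ≤ X ∧ A < X ∧
      (2 * X^(ε/16) + B) * X^(-ε) ≤ 1/2 ∧ 2 * X^(ε/16) < X ∧ 2 * X^(ε/16) ≤ X^(ε/4) ∧
      2 / L * Real.log X ≤ X^(ε/16) ∧ 4 * Ct * X^(-(7*ε/16)) ≤ η ∧
      2 * π * (X * Real.exp (-κ * X^(7*ε/16))) ≤ η := by
  have t1 : Filter.Tendsto (fun X : ℝ => X^(-(15*ε/16))) Filter.atTop (nhds 0) := tendsto_rpow_neg_atTop (by positivity)
  have t2 : Filter.Tendsto (fun X : ℝ => X^(-ε)) Filter.atTop (nhds 0) := tendsto_rpow_neg_atTop hε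
  have t3 : Filter.Tendsto (fun X : ℝ => X^(-(1-ε/16))) Filter.atTop (nhds 0) := tendsto_rpow_neg_atTop (by linarith)
  have t4 : Filter.Tendsto (fun X : ℝ => X^(-(3*ε/16))) Filter.atTop (nhds 0) := tendsto_rpow_neg_atTop (by positivity)
  have t5 : Filter.Tendsto (fun X : ℝ => X^(-(7*ε/16))) Filter.atTop (nhds 0) := tendsto_rpow_neg_atTop (by positivity)
  have f1 : ∀ᶠ X : ℝ in Filter.atTop, 2 * X^(-(15*ε/16)) + B * X^(-ε) < 1/2 := by
    have := (t1.const_mul 2).add (t2.const_mul B)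
    simp only [mul_zero, add_zero] at this
    exact this.eventually_lt_const (by norm_num)
  have f2 : ∀ᶠ X : ℝ in Filter.atTop, 2 * X^(-(1-ε/16)) < 1 := by
    have := t3.const_mul 2
    rw [mul_zero] at this
    exact this.eventually_lt_const (by norm_num)
  have f3 : ∀ᶠ X : ℝ in Filter.atTop, 2 * X^(-(3*ε/16)) < 1 := by
    have := t4.const_mul 2
    rw [mul_zero] at this
    exact this.eventually_lt_const (by norm_num)
  have f4 : ∀ᶠ X : ℝ in Filter.atTop, 2 / L * Real.log X ≤ X^(ε/16) := by
    have := (isLittleO_log_rpow_atTop (show 0 < ε/16 by positivity)).const_mul_left (2/L)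
    have := this.bound (show (0:ℝ) < 1 by norm_num)
    filter_upwards [this, Filter.eventually_ge_atTop 0] with X h h0
    rw [one_mul, Real.norm_of_nonneg (Real.rpow_nonneg h0 _)] at h
    exact (le_abs_self _).trans h
  have f5 : ∀ᶠ X : ℝ in Filter.atTop, 4 * Ct * X^(-(7*ε/16)) < η := by
    have := t5.const_mul (4*Ct)
    rw [mul_zero] at this
    exact this.eventually_lt_const hη
  have f6 : ∀ᶠ X : ℝ in Filter.atTop, 2 * π * ((X^(7*ε/16))^(16/(7*ε)) * Real.exp (-κ * X^(7*ε/16))) < η := by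
    have h1 := (tendsto_rpow_mul_exp_neg_mul_atTop_nhds_zero (16/(7*ε)) κ hκ).comp (tendsto_rpow_atTop (show 0 < 7*ε/16 by positivity))
    have := h1.const_mul (2*π)
    rw [mul_zero] at this
    exact this.eventually_lt_const hη
  filter_upwards [f1, f2, f3, f4, f5, f6, Filter.eventually_ge_atTop 2, Filter.eventually_gt_atTop A] with X h1 h2 h3 h4 h5 h6 h7 h8
  have hX : 0 < X := by linarith
  refine ⟨h7, h8, ?_, ?_, ?_, h4, h5.le, ?_⟩
  · rw [add_mul, mul_assoc, ← Real.rpow_add hX, show ε/16 + -ε = -(15*ε/16) by ring]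
    exact h1.le
  · have : X^(ε/16) = X^(-(1-ε/16)) * X := by
      nth_rewrite 3 [← Real.rpow_one X]
      rw [← Real.rpow_add hX]; congr 1; ring
    rw [this]; nlinarith
  · have : X^(ε/16) = X^(-(3*ε/16)) * X^(ε/4) := by
      rw [← Real.rpow_add hX]; congr 1; ring
    rw [this]
    have := Real.rpow_pos_of_pos hX (ε/4)
    nlinarith
  · rw [← Real.rpow_mul hX.le, show 7*ε/16*(16/(7*ε)) = 1 by field_simp, Real.rpow_one] at h6
    exact h6.le

variable {F : Type} [Field F] [Fintype F]

lemma coef_aQ (m : ℕ) (hm : 1 ≤ m) : Coef (Fintype.card F : ℝ) m (aQ F m) where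
  nonneg := aQ_nonneg m
  zero := aQ_zero m
  one := fun j => aQ_one m j
  leA := aQ_le_a m
  leB := fun j h1 h2 => by
    have hq := card_gt_one (F := F)
    have h := aQ_le_b (F := F) m j h1 h2
    refine h.trans ?_
    set q := (Fintype.card F : ℝ)
    have hq0 : 0 < q := by linarith
    have hs : 0 < √q := Real.sqrt_pos.2 hq0
    have hs1 : 1 ≤ √q := by rw [Real.one_le_sqrt]; linarith
    rw [mul_div_assoc, div_eq_mul_one_div 2 (√q^j)]
    refine mul_le_mul_of_nonneg_left ?_ (by norm_num)
    rw [div_le_div_iff₀ (by positivity) (by positivity), one_mul]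
    have e : q = (√q)^2 := (Real.sq_sqrt hq0.le).symm
    have e1 : q^(j/2) ≤ √q^j := by
      nth_rewrite 1 [e]
      rw [← pow_mul]
      exact pow_le_pow_right₀ hs1 (by omega)
    calc q^(j/2) * √q^j ≤ √q^j * √q^j := by gcongr
      _ = q^j := by rw [← mul_pow, Real.mul_self_sqrt hq0.le]
  two := aQ_two m hm

/-- combining everything into a real identity -/
lemma ratio_eq (n m : ℕ) (hm : 1 ≤ m) (x y : ℝ) (hx : 0 < x) (hy : 0 < y) (hyq : y < (Fintype.card F : ℝ))
    (hs : HasSum (fun j : ℕ => aQ F m j * y^j) n) (hxs : ∑ j ∈ Finset.Icc 1 m, x^j = n) (η : ℝ)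
    (hI : ‖(∫ θ in (-π)..π, Complex.exp (phi (fun j => aQ F m j * y^j) θ)) - ∫ θ in (-π)..π, Complex.exp (phi (fun j => a0 m j * x^j) θ)‖
      ≤ 16*η*‖∫ θ in (-π)..π, Complex.exp (phi (fun j => a0 m j * x^j) θ)‖) :
    0 < Gq F m y ∧ ∃ ρ : ℝ, 1 - 16*η ≤ ρ ∧ ρ ≤ 1 + 16*η ∧
      polyProb F n m / permProb n m = Gq F m y * Real.exp (∑ j ∈ Finset.Icc 1 m, y^j/j - ∑ j ∈ Finset.Icc 1 m, x^j/j + n * Real.log (x/y)) * ρ := by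
  have h1 := fa_full (aQ F m) (fun n => polyProb F n m) (polyProb_full m 0 (by omega)) (polyProb_rec m) (aQ_nonneg m) (aQ_zero m) n y hy hs
  have hrec0 : ∀ n : ℕ, ((n:ℝ)+1) * permProb (n+1) m = ∑ k ∈ Finset.range (n+1), a0 m (k+1) * permProb (n-k) m := by
    intro n
    rw [permProb_rec m hm n]
    refine Finset.sum_congr rfl fun k _ => ?_
    simp [a0]
  have hs0 : HasSum (fun j : ℕ => a0 m j * x^j) n := by
    have := a0_hasSum m x (fun _ => 1)
    simp only [one_mul] at this
    rwa [hxs] at this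
  have h2 := fa_full (a0 m) (fun n => permProb n m) (permProb_zero m hm) hrec0 (a0_nonneg m) (by simp [a0]) n x hx hs0
  have hE0 : ∑' j : ℕ, a0 m j * x^j / j = ∑ j ∈ Finset.Icc 1 m, x^j/j := by
    have := (a0_hasSum m x (fun j => (j:ℝ)⁻¹)).tsum_eq
    rw [tsum_congr (fun j => by rw [div_eq_inv_mul]), this]
    refine Finset.sum_congr rfl fun j _ => by rw [div_eq_inv_mul]
  rw [hE0] at h2
  rw [← FqFun_exp m y hy hyq] at h1
  have hF0 : 0 < FqFun F m y := by rw [FqFun_exp m y hy hyq]; exact Real.exp_pos _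
  set I1 := ∫ θ in (-π)..π, Complex.exp (phi (fun j => aQ F m j * y^j) θ)
  set I0 := ∫ θ in (-π)..π, Complex.exp (phi (fun j => a0 m j * x^j) θ)
  have hp1 := polyProb_pos (F := F) m n hm
  have hp0 := permProb_pos n m hm
  set p1 := polyProb F n m
  set p0 := permProb n m
  set E0 := Real.exp (∑ j ∈ Finset.Icc 1 m, x^j/j) with hE0d
  have hE0p : 0 < E0 := Real.exp_pos _
  set i1 := 2*π*p1*y^n / FqFun F m y with hi1
  set i0 := 2*π*p0*x^n / E0 with hi0
  have hI1 : I1 = (i1 : ℂ) := by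
    rw [hi1, Complex.ofReal_div, eq_div_iff (by exact_mod_cast hF0.ne')]
    rw [h1]; ring
  have hI0 : I0 = (i0 : ℂ) := by
    rw [hi0, Complex.ofReal_div, eq_div_iff (by exact_mod_cast hE0p.ne')]
    rw [h2]; ring
  have hi0p : 0 < i0 := by positivity
  rw [hI1, hI0, ← Complex.ofReal_sub, Complex.norm_real, Complex.norm_real, Real.norm_of_nonneg hi0p.le, Real.norm_eq_abs, abs_le] at hI
  refine ⟨mul_pos hF0 (Real.exp_pos _), i1/i0, ?_, ?_, ?_⟩
  · rw [le_div_iff₀ hi0p]; linarith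
  · rw [div_le_iff₀ hi0p]; linarith
  · have hxy : Real.exp (n * Real.log (x/y)) = x^n/y^n := by
      rw [Real.exp_nat_mul, Real.exp_log (by positivity), div_pow]
    rw [Gq, Real.exp_add, Real.exp_sub, Real.exp_neg, hxy, hi1, hi0]
    have hEy := Real.exp_pos (∑ i ∈ Finset.Icc 1 m, y ^ i / (i : ℝ))
    have hp := Real.pi_pos
    field_simp
    have : Real.exp (∑ j ∈ Finset.Icc 1 m, x^j/j) = E0 := rfl
    simp only [this]
    try field_simp

set_option maxHeartbeats 4000000 in
lemma main_fixed (ε : ℝ) (hε : 0 < ε) (hε2 : ε < 1/2) (r κ η : ℝ)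
    (hr : r = Real.exp (-(Real.log (Fintype.card F) * ε / 8)))
    (hκ : κ = (1-r)/(2*(Fintype.card F : ℝ)*π^2)) (hη0 : 0 < η) (hη : η ≤ 1/4)
    (n : ℕ)
    (hp : 2 ≤ (n:ℝ) ∧ (Fintype.card F : ℝ) < (n:ℝ) ∧
      (2 * (n:ℝ)^(ε/16) + 2*(1-r)⁻¹) * (n:ℝ)^(-ε) ≤ 1/2 ∧ 2 * (n:ℝ)^(ε/16) < n ∧ 2 * (n:ℝ)^(ε/16) ≤ (n:ℝ)^(ε/4) ∧
      2 / Real.log (Fintype.card F) * Real.log n ≤ (n:ℝ)^(ε/16) ∧ 4 * Ctail r * (n:ℝ)^(-(7*ε/16)) ≤ η ∧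
      2 * π * ((n:ℝ) * Real.exp (-κ * (n:ℝ)^(7*ε/16))) ≤ η)
    (m : ℕ) (hml : (1 + ε) * Real.log n / Real.log (Fintype.card F) ≤ (m : ℝ))
    (hmu : (m : ℝ) ≤ (2 - ε) * Real.log n / Real.log (Fintype.card F))
    (y : ℝ) (hy : 0 < y) (hyq : y < (Fintype.card F : ℝ))
    (heq : y * deriv (FqFun F m) y / FqFun F m y = (n : ℝ)) :
    0 < Gq F m y ∧ ∃ ρ Δ : ℝ, 1 - 16*η ≤ ρ ∧ ρ ≤ 1 + 16*η ∧
      ((1-r)/2)^4/2 * (n : ℝ) ^ 3 / ((m : ℝ) * (Fintype.card F : ℝ) ^ (2 * m)) ≤ Δ ∧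
      Δ ≤ (Ctail r)^2/((1-r)/2) * (n : ℝ) ^ 3 / ((m : ℝ) * (Fintype.card F : ℝ) ^ (2 * m)) ∧
      polyProb F n m / permProb n m = Gq F m y * Real.exp Δ * ρ := by
  obtain ⟨g1, g2, g3, g4, g5, g6, g7, g8⟩ := hp
  have hQ := card_gt_one (F := F)
  set Q := (Fintype.card F : ℝ) with hQd
  have hQ0 : 0 < Q := by linarith
  have hL : 0 < Real.log Q := Real.log_pos (by linarith)
  have hn0 : (0:ℝ) < n := by linarith
  have hn1 : (1:ℝ) ≤ n := by linarith
  have hn2 : 2 ≤ n := by exact_mod_cast g1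
  have hl : 0 < Real.log n := Real.log_pos (by linarith)
  have hlL : Real.log Q < Real.log n := Real.log_lt_log hQ0 g2
  have hm2 : 2 ≤ m := by
    have : (1:ℝ) < m := by
      refine lt_of_lt_of_le ?_ hml
      rw [lt_div_iff₀ hL]
      nlinarith
    have : 1 < m := by exact_mod_cast this
    omega
  have hm1 : 1 ≤ m := by omega
  have hm0 : (0:ℝ) < m := by exact_mod_cast hm1
  have hm1' : (1:ℝ) ≤ m := by exact_mod_cast hm1
  have hmσ : (m:ℝ) ≤ (n:ℝ)^(ε/16) := by
    refine hmu.trans (le_trans ?_ g6)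
    rw [div_mul_eq_mul_div]
    gcongr
    linarith
  have hr0 : 0 < r := by rw [hr]; exact Real.exp_pos _
  have hr1 : r < 1 := by
    rw [hr, Real.exp_lt_one_iff]
    have : 0 < Real.log Q * ε / 8 := by positivity
    linarith
  have hr' : 0 < (1-r)⁻¹ := inv_pos.2 (by linarith)
  have h1r : 0 < 1 - r := by linarith
  have hκ0 : 0 < κ := by rw [hκ]; positivity
  have hCt := Ctail_pos hr0 hr1
  have hnW : (n:ℝ)^2/Q^m ≤ (n:ℝ)^(1-ε) := by
    rw [div_le_iff₀ (by positivity), ← Real.log_le_log_iff (by positivity) (by positivity), Real.log_mul (by positivity) (by positivity),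
      Real.log_pow, Real.log_pow, Real.log_rpow hn0]
    rw [div_le_iff₀ hL] at hml
    push_cast
    linarith
  have hnsplit : (n:ℝ)^(1-ε) = (n:ℝ)^(-ε) * n := by
    nth_rewrite 3 [← Real.rpow_one (n:ℝ)]
    rw [← Real.rpow_add hn0]; congr 1; ring
  have hC := coef_aQ (F := F) m hm1
  have hs := aQ_hasSum m y hy hyq n heq
  have c1 : (2*m + 2*(1-r)⁻¹) * ((n:ℝ)^2/Q^m) ≤ n/2 := by
    calc (2*m + 2*(1-r)⁻¹) * ((n:ℝ)^2/Q^m) ≤ (2*(n:ℝ)^(ε/16) + 2*(1-r)⁻¹) * (n:ℝ)^(1-ε) := by gcongr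
      _ = (2*(n:ℝ)^(ε/16) + 2*(1-r)⁻¹) * (n:ℝ)^(-ε) * n := by rw [hnsplit]; ring
      _ ≤ 1/2 * n := by gcongr
      _ = n/2 := by ring
  have c3 : Real.log (2*m) ≤ ε/4 * Real.log n := by
    rw [← Real.log_rpow hn0]
    exact Real.log_le_log (by positivity) (by linarith)
  obtain ⟨hyr, hyl, hlow, hym⟩ := y_bounds ε hε hε2 hQ n hn2 hm1 hml hmu hC hy hs hr c1 (by linarith) c3
  obtain ⟨x, hx, hxs⟩ := exists_x m hm1 n hn0
  have hyx := y_le_x hC hm1 hy hs hx hxs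
  set T := (n:ℝ)^(-1/2+ε/4) with hT
  have hT0 : 0 < T := by positivity
  have hT2 : T^2 = (n:ℝ)^(-1+ε/2) := by
    rw [hT, ← Real.rpow_natCast, ← Real.rpow_mul hn0.le]; congr 1; push_cast; ring
  have hT3 : T^3 = (n:ℝ)^(-3/2+3*ε/4) := by
    rw [hT, ← Real.rpow_natCast, ← Real.rpow_mul hn0.le]; congr 1; push_cast; ring
  have hmn : (m:ℝ) ≤ n := by linarith
  have hI := integrals_close hC hQ hm2 hr0 hr1 hn0 hx hy hyr hyl hlow hym hs hxs T η hT0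
    (by
      have : T ≤ 1 := Real.rpow_le_one_of_one_le_of_nonpos hn1 (by linarith)
      linarith [Real.pi_gt_three])
    (by
      have e : T^2 * n = (n:ℝ)^(ε/2) := by
        rw [hT2]
        nth_rewrite 2 [← Real.rpow_one (n:ℝ)]
        rw [← Real.rpow_add hn0]; congr 1; ring
      have : 1 ≤ (n:ℝ)^(ε/2) := Real.one_le_rpow hn1 (by positivity)
      nlinarith)
    (by
      calc T^3 * (m^2*n) ≤ T^3 * (((n:ℝ)^(ε/16))^2 * n) := by gcongr
        _ = (n:ℝ)^(-1/2+7*ε/8) := by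
          rw [hT3, ← Real.rpow_natCast, ← Real.rpow_mul hn0.le]
          nth_rewrite 3 [← Real.rpow_one (n:ℝ)]
          rw [← Real.rpow_add hn0, ← Real.rpow_add hn0]; congr 1; push_cast; ring
        _ ≤ 1 := Real.rpow_le_one_of_one_le_of_nonpos hn1 (by linarith))
    (by
      calc 2*T^2*(2*m*Ctail r*((n:ℝ)^2/Q^m)) ≤ 2*T^2*(2*(n:ℝ)^(ε/16)*Ctail r*(n:ℝ)^(1-ε)) := by gcongr
        _ = 4 * Ctail r * ((n:ℝ)^(-1+ε/2) * (n:ℝ)^(ε/16) * (n:ℝ)^(1-ε)) := by rw [hT2]; ring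
        _ = 4 * Ctail r * (n:ℝ)^(-(7*ε/16)) := by
          rw [← Real.rpow_add hn0, ← Real.rpow_add hn0]; congr 2; ring
        _ ≤ η := g7)
    hη
    (by
      have e1 : κ * (n:ℝ)^(7*ε/16) ≤ ((1-r)/(2*Q)*n)/m*(T^2/π^2) := by
        have e2 : ((1-r)/(2*Q)*n)/m*(T^2/π^2) = κ * ((n:ℝ)^(ε/2) / m) := by
          have e3 : (n:ℝ) * T^2 = (n:ℝ)^(ε/2) := by
            rw [hT2]
            nth_rewrite 1 [← Real.rpow_one (n:ℝ)]
            rw [← Real.rpow_add hn0]; congr 1; ring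
          rw [← e3, hκ]
          field_simp
        rw [e2]
        gcongr
        rw [le_div_iff₀ hm0]
        calc (n:ℝ)^(7*ε/16) * m ≤ (n:ℝ)^(7*ε/16) * (n:ℝ)^(ε/16) := by gcongr
          _ = (n:ℝ)^(ε/2) := by rw [← Real.rpow_add hn0]; congr 1; ring
      have e4 : √(m*n) ≤ n := by
        rw [Real.sqrt_le_left hn0.le]; nlinarith
      have e5 : 0 < √(m*n) := Real.sqrt_pos.2 (by positivity)
      rw [← div_eq_mul_inv, le_div_iff₀ e5]
      calc _ ≤ 2*π*Real.exp (-κ * (n:ℝ)^(7*ε/16)) * n := by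
            gcongr
            linarith
        _ ≤ η := by linarith)
  obtain ⟨hG, ρ, hρ1, hρ2, hρ3⟩ := ratio_eq n m hm1 x y hx hy hyq hs hxs η hI
  refine ⟨hG, ρ, _, hρ1, hρ2, ?_, ?_, hρ3⟩
  · refine le_trans ?_ (saddle hx hy hyx hn0 hm1 hxs _ rfl).1
    have hR := lowerR hC hm1 hy hs
    have hWl : ((1-r)/2*n)^2/Q^m ≤ y^(2*m)/Q^m := by
      rw [mul_comm 2 m, pow_mul]; gcongr
    have hpos : 0 ≤ ((1-r)/2*n)^2/Q^m := by positivity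
    calc ((1-r)/2)^4/2 * (n : ℝ) ^ 3 / ((m : ℝ) * Q ^ (2 * m)) = (((1-r)/2*n)^2/Q^m)^2/(2*m*n) := by
          rw [mul_comm 2 m, pow_mul]; field_simp
      _ ≤ _ := by
          gcongr
          exact hWl.trans hR
  · refine (saddle hx hy hyx hn0 hm1 hxs _ rfl).2.trans ?_
    have hR := refinedR hC hm1 hy hQ0 hr0 hr1 hyr hyl hs
    have hR0 := lowerR hC hm1 hy hs
    have hR1 : 0 ≤ n - ∑ j ∈ Finset.Icc 1 m, y^j := le_trans (by positivity) hR0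
    have hWu : y^(2*m)/Q^m ≤ (n:ℝ)^2/Q^m := by
      rw [mul_comm 2 m, pow_mul]; gcongr
    calc _ ≤ (Ctail r * ((n:ℝ)^2/Q^m))^2/(m*((1-r)/2*n)) := by
          gcongr
          exact hR.trans (by gcongr)
      _ = _ := by rw [mul_comm 2 m, pow_mul]; field_simp

end FinalPart

theorem stmt13 :
    ∀ (F : Type) [Field F] [Fintype F], ∀ ε : ℝ, 0 < ε → ε < 1 / 2 →
      ∃ c C : ℝ, 0 < c ∧ 0 < C ∧ ∀ δ : ℝ, 0 < δ → ∃ N : ℕ, ∀ n : ℕ, N ≤ n → ∀ m : ℕ,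
      (1 + ε) * Real.log n / Real.log (Fintype.card F) ≤ (m : ℝ) →
      (m : ℝ) ≤ (2 - ε) * Real.log n / Real.log (Fintype.card F) →
      ∀ xq : ℝ, 0 < xq → xq < (Fintype.card F : ℝ) →
      xq * deriv (FqFun F m) xq / FqFun F m xq = (n : ℝ) →
      (1 - δ) * Gq F m xq *
          Real.exp (c * (n : ℝ) ^ 3 / ((m : ℝ) * (Fintype.card F : ℝ) ^ (2 * m))) ≤
        polyProb F n m / permProb n m ∧
      polyProb F n m / permProb n m ≤
        (1 + δ) * Gq F m xq *
          Real.exp (C * (n : ℝ) ^ 3 / ((m : ℝ) * (Fintype.card F : ℝ) ^ (2 * m))) := by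
  intro F _ _ ε hε hε2
  have hQ := card_gt_one (F := F)
  have hL : 0 < Real.log (Fintype.card F) := Real.log_pos (by linarith)
  obtain ⟨r, hr⟩ : ∃ r, r = Real.exp (-(Real.log (Fintype.card F) * ε / 8)) := ⟨_, rfl⟩
  have hr0 : 0 < r := by rw [hr]; exact Real.exp_pos _
  have hr1 : r < 1 := by
    rw [hr, Real.exp_lt_one_iff]
    have : 0 < Real.log (Fintype.card F) * ε / 8 := by positivity
    linarith
  have h1r : 0 < 1 - r := by linarith
  have hCt := Ctail_pos hr0 hr1
  refine ⟨((1-r)/2)^4/2, (Ctail r)^2/((1-r)/2), by positivity, by positivity, fun δ hδ => ?_⟩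
  obtain ⟨η, hη0, hη, hηδ⟩ : ∃ η : ℝ, 0 < η ∧ η ≤ 1/32 ∧ 16 * η ≤ δ :=
    ⟨min (1/32) (δ/16), by positivity, min_le_left _ _, by linarith [min_le_right (1/32) (δ/16)]⟩
  have hev := ev_params ε hε hε2 (Fintype.card F : ℝ) (2*(1-r)⁻¹) (Real.log (Fintype.card F)) (Ctail r)
    ((1-r)/(2*(Fintype.card F : ℝ)*π^2)) η (by positivity) hη0
  obtain ⟨N, hN⟩ := Filter.eventually_atTop.1 (tendsto_natCast_atTop_atTop.eventually hev)
  refine ⟨N, fun n hn m hml hmu y hy hyq heq => ?_⟩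
  obtain ⟨hG, ρ, Δ, h1, h2, h3, h4, h5⟩ := main_fixed ε hε hε2 r _ η hr rfl hη0 (by linarith) n (hN n hn) m hml hmu y hy hyq heq
  rw [h5]
  have hρ0 : 0 ≤ ρ := by linarith
  constructor
  · calc _ ≤ ρ * Gq F m y * Real.exp Δ := by
          gcongr
          linarith
      _ = _ := by ring
  · calc _ = ρ * Gq F m y * Real.exp Δ := by ring
      _ ≤ _ := by
          gcongr
          linarith
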